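/- arXiv:2001.00654 — 2 statements merged into one kernel-verified Lean document; each statement's English description precedes it below -/
import Mathlib

section
/- Let n ≥ 1. Then the following identity of polynomials in ℚ[t] holds: n · Σ_{π ∈ 𝔠_n} t^{pk(π)+1} = Σ_{d ∣ n, d odd} μ(d) (1−t)^{(n−n/d)/2} P_{n/d}^{pk}(t), where P_m^{pk}(t) = Σ_{π ∈ S_m} t^{pk(π)+1}. (For d an odd divisor of n, the exponent (n−n/d)/2 = (n/d)(d−1)/2 is a nonnegative integer.) -/
open scoped Classical

noncomputable section

def oneLine (n : ℕ) (π : Equiv.Perm (Fin n)) (i : ℕ) : ℕ :=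
  if h : 1 ≤ i ∧ i ≤ n then (π ⟨i - 1, by omega⟩).val + 1 else 0

def des (n : ℕ) (π : Equiv.Perm (Fin n)) : ℕ :=
  ((Finset.Icc 1 (n - 1)).filter fun i => oneLine n π (i + 1) < oneLine n π i).card

def pk (n : ℕ) (π : Equiv.Perm (Fin n)) : ℕ :=
  ((Finset.Icc 2 (n - 1)).filter fun i =>
    oneLine n π (i - 1) < oneLine n π i ∧ oneLine n π (i + 1) < oneLine n π i).card

def lpk (n : ℕ) (π : Equiv.Perm (Fin n)) : ℕ :=
  ((Finset.Icc 1 (n - 1)).filter fun i =>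
    oneLine n π (i - 1) < oneLine n π i ∧ oneLine n π (i + 1) < oneLine n π i).card

def pval (n : ℕ) (π : Equiv.Perm (Fin n)) : ℕ :=
  ((Finset.Icc 2 (n - 1)).filter fun i =>
    oneLine n π i < oneLine n π (i - 1) ∧ oneLine n π i < oneLine n π (i + 1)).card

def udr (n : ℕ) (π : Equiv.Perm (Fin n)) : ℕ := lpk n π + pval n π + 1

def fullCycleType (n : ℕ) (π : Equiv.Perm (Fin n)) : Multiset ℕ :=
  π.cycleType + Multiset.replicate (n - π.support.card) 1

def numCycles (n : ℕ) (π : Equiv.Perm (Fin n)) : ℕ := Multiset.card (fullCycleType n π)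

def numOddCycles (n : ℕ) (π : Equiv.Perm (Fin n)) : ℕ :=
  Multiset.card ((fullCycleType n π).filter fun p => p % 2 = 1)

def IsCyclicPerm (n : ℕ) (π : Equiv.Perm (Fin n)) : Prop :=
  fullCycleType n π = {n}

def cyclicSet (n : ℕ) : Finset (Equiv.Perm (Fin n)) :=
  Finset.univ.filter fun π => IsCyclicPerm n π

def invSet (n : ℕ) : Finset (Equiv.Perm (Fin n)) :=
  Finset.univ.filter fun π => π ^ 2 = 1

def eulerianA (m : ℕ) : Polynomial ℚ :=
  ∑ π : Equiv.Perm (Fin m), Polynomial.X ^ (des m π + 1)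

def peakP (m : ℕ) : Polynomial ℚ :=
  ∑ π : Equiv.Perm (Fin m), Polynomial.X ^ (pk m π + 1)

def leftPeakP (m : ℕ) : Polynomial ℚ :=
  ∑ π : Equiv.Perm (Fin m), Polynomial.X ^ (lpk m π)

def cnk (n k : ℕ) : ℕ :=
  (Finset.univ.filter fun π : Equiv.Perm (Fin n) =>
    (∀ p ∈ fullCycleType n π, ¬ (4 ∣ p)) ∧ numCycles n (π ^ 2) = k).card

def bnk (n k : ℕ) : ℕ :=
  (Finset.univ.filter fun π : Equiv.Perm (Fin n) => numCycles n (π ^ 2) = k).card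

def dnk (n k : ℕ) : ℕ :=
  (Finset.univ.filter fun π : Equiv.Perm (Fin n) => numOddCycles n (π ^ 2) = k).card

/-!
Give the letters `0 < 1 < 2 < ⋯` alternating signs, and call a word enriched for a permutation `π`
if its letters increase weakly along `π`, where a repeated letter is allowed at the ascents or at
the descents of `π` according to its sign. By a transfer computation, one letter of `π` at a time,
the enriched words of `π ∈ S_n` over the first `2k` letters have the generating function
`½ Q^(n+1) U^(pk π + 1)` in `k`, where `Q = (1 + t) / (1 - t)` and `U = 4t / (1 + t)²`. Since
`Q² (1 - U) = 1`, substituting `U` for `t` turns the theorem into the identity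
`n · #{(π, w) | π cyclic, w enriched for π} = ∑ μ(d) (2k)^(n/d)`, summed over the odd `d ∣ n`.

To count the pairs, label a circle of `n` points by permutations `φ` and read the letters of `w`
around the circle. This gives a circular word `u`, and the possible `φ` are the orderings of the
circle that are fixed when each point is re-sorted by its letter and then, up to the sign of that
letter, by its successor. If `u` has minimal period `p`, there is one such ordering for `n = p`,
there are two for `n = 2p` if the signs along a period of `u` multiply to `-1`, and none in all
other cases. When the alphabet has as many positive as negative letters, the counts for the
circles of `n/d` points, `d ∣ n` odd, therefore add up to the number `(2k)^n` of all words, and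
Möbius inversion over the odd divisors gives the identity.
-/

namespace PeakEnumeration

open Finset Function
open Equiv (Perm)

section Enriched

variable {α : Type*} {n : ℕ} {ε : α → ℤˣ}

/-- The sorting key of the value `x` carrying the letter `a`: keys are compared first by letter,
and within a letter `a` by the value, in increasing or decreasing order according to the sign
`ε a`. -/
def letterKey (ε : α → ℤˣ) (a : α) (x : ℤ) : α ×ₗ ℤ := toLex (a, ε a * x)

theorem letterKey_inj {a b : α} {x y : ℤ} :
    letterKey ε a x = letterKey ε b y ↔ a = b ∧ x = y := by
  refine ⟨fun h => ?_, by rintro ⟨rfl, rfl⟩; rfl⟩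
  obtain ⟨rfl, hxy⟩ := Prod.ext_iff.mp (toLex_inj.mp h)
  exact ⟨rfl, mul_left_cancel₀ (Units.ne_zero (ε a)) hxy⟩

/-- The one-line notation of a permutation, as a sequence of integers numbered from `0`. -/
def permValue (π : Perm (Fin n)) (i : Fin n) : ℤ := (π i : ℕ)

theorem permValue_lt_permValue {π : Perm (Fin n)} {a b : Fin n} :
    permValue π a < permValue π b ↔ π a < π b := by
  simp only [permValue, Nat.cast_lt, Fin.val_fin_lt]

theorem permValue_injective (π : Perm (Fin n)) : Injective (permValue π) := fun _ _ h =>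
  π.injective (Fin.val_injective (Nat.cast_injective h))

theorem letterKey_comp_injective (φ c : Perm (Fin n)) (w : Fin n → α) :
    Injective fun a => letterKey ε (w a) (permValue φ (c a)) := fun _ _ h =>
  c.injective (permValue_injective φ (letterKey_inj.mp h).2)

variable [LinearOrder α]

theorem letterKey_lt_letterKey {a b : α} {x y : ℤ} :
    letterKey ε a x < letterKey ε b y ↔ a < b ∨ a = b ∧ (ε a : ℤ) * x < ε b * y :=
  Prod.Lex.toLex_lt_toLex

/-- A word `f` is enriched for a sequence of values `p` if the keys of the values `p i` labelled
by `f i` increase strictly. For two signs this is Stembridge's notion of an enriched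
`P`-partition of a chain, with letters `⋯ < -k < k < ⋯` and alternating signs. -/
def IsEnriched (ε : α → ℤˣ) (p : Fin n → ℤ) (f : Fin n → α) : Prop :=
  StrictMono fun i => letterKey ε (f i) (p i)

/-- The set of words of length `n` over the alphabet `S`. -/
abbrev words (S : Finset α) (n : ℕ) : Finset (Fin n → α) := Fintype.piFinset fun _ => S

/-- The number of enriched words over the alphabet `S` for a sequence of values. -/
def enrichedCount (ε : α → ℤˣ) (S : Finset α) (p : Fin n → ℤ) : ℕ :=
  #{f ∈ words S n | IsEnriched ε p f}

theorem strictMono_comp_iff_eq_sort {β : Type*} [LinearOrder β] {g : Fin n → β}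
    (hg : Injective g) (σ : Perm (Fin n)) : StrictMono (g ∘ σ) ↔ σ = Tuple.sort g := by
  rw [Tuple.eq_sort_iff]
  refine ⟨fun h => ⟨h.monotone, fun i j hij hgij => ?_⟩,
    fun h => h.1.strictMono_of_injective (hg.comp σ.injective)⟩
  exact absurd (σ.injective (hg hgij)) hij.ne

theorem enrichedCount_eq_card_comp (S : Finset α) (p : Fin n → ℤ) (φ : Perm (Fin n)) :
    enrichedCount ε S p = #{w ∈ words S n | IsEnriched ε p (w ∘ φ)} := by
  refine card_equiv (φ.arrowCongr (Equiv.refl α)) fun f => ?_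
  have hcomp : φ.arrowCongr (Equiv.refl α) f ∘ φ = f := by
    ext i
    simp only [Equiv.arrowCongr_apply, Equiv.coe_refl, comp_apply, id_eq, Equiv.symm_apply_apply]
  rw [mem_filter, mem_filter, hcomp, Fintype.mem_piFinset, Fintype.mem_piFinset]
  refine and_congr_left fun _ => ⟨fun h i => h _, fun h i => ?_⟩
  simpa only [Equiv.arrowCongr_apply, Equiv.coe_refl, comp_apply, id_eq,
    Equiv.symm_apply_apply] using h (φ i)

theorem sum_enrichedCount (ε : α → ℤˣ) (S : Finset α) (n : ℕ) :
    ∑ π : Perm (Fin n), enrichedCount ε S (permValue π) = #S ^ n := by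
  have hsort (w : Fin n → α) (π : Perm (Fin n)) : IsEnriched ε (permValue π) (w ∘ π) ↔
      π = Tuple.sort fun a => letterKey ε (w a) (a : ℕ) :=
    strictMono_comp_iff_eq_sort
      (fun _ _ h => Fin.val_injective (Nat.cast_injective (letterKey_inj.mp h).2)) π
  calc ∑ π : Perm (Fin n), enrichedCount ε S (permValue π)
      = ∑ π : Perm (Fin n), #{w ∈ words S n | IsEnriched ε (permValue π) (w ∘ π)} :=
        sum_congr rfl fun π _ => enrichedCount_eq_card_comp S _ π
    _ = ∑ w ∈ words S n, #{π : Perm (Fin n) | IsEnriched ε (permValue π) (w ∘ π)} :=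
        sum_card_bipartiteAbove_eq_sum_card_bipartiteBelow
          fun (π : Perm (Fin n)) (w : Fin n → α) => IsEnriched ε (permValue π) (w ∘ π)
    _ = #S ^ n := by
        simp only [hsort, filter_eq', mem_univ, if_true, card_singleton, sum_const, smul_eq_mul,
          mul_one, Fintype.card_piFinset_const]

end Enriched

section Restandardize

variable {α : Type*} [LinearOrder α] {n : ℕ} {ε : α → ℤˣ} {c : Perm (Fin n)} {w : Fin n → α}

/-- Re-ranks the points `a` by the letter `w a` and then, in the direction prescribed by the sign
of that letter, by the rank `φ (c a)` of the next point. -/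
def restandardize (ε : α → ℤˣ) (c : Perm (Fin n)) (w : Fin n → α) (φ : Perm (Fin n)) :
    Perm (Fin n) :=
  (Tuple.sort fun a => letterKey ε (w a) (permValue φ (c a)))⁻¹

theorem inv_sort_lt_inv_sort {β : Type*} [LinearOrder β] {g : Fin n → β} (hg : Injective g)
    {a b : Fin n} : (Tuple.sort g)⁻¹ a < (Tuple.sort g)⁻¹ b ↔ g a < g b := by
  simpa only [comp_apply, Perm.coe_inv, Equiv.apply_symm_apply] using
    (((strictMono_comp_iff_eq_sort hg _).mpr rfl).lt_iff_lt
      (a := (Tuple.sort g)⁻¹ a) (b := (Tuple.sort g)⁻¹ b)).symm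

theorem restandardize_lt_iff {φ : Perm (Fin n)} {a b : Fin n} :
    restandardize ε c w φ a < restandardize ε c w φ b ↔
      letterKey ε (w a) (permValue φ (c a)) < letterKey ε (w b) (permValue φ (c b)) :=
  inv_sort_lt_inv_sort (letterKey_comp_injective φ c w)

theorem isEnriched_conj_iff_isFixedPt (φ : Perm (Fin n)) :
    IsEnriched ε (permValue (φ * c * φ⁻¹)) (w ∘ ⇑φ⁻¹) ↔ IsFixedPt (restandardize ε c w) φ := by
  have hsort := strictMono_comp_iff_eq_sort (letterKey_comp_injective (ε := ε) φ c w) φ⁻¹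
  rw [IsFixedPt, restandardize, inv_eq_iff_eq_inv, eq_comm, ← hsort]
  rfl

theorem sum_enrichedCount_conj (ε : α → ℤˣ) (S : Finset α) (c : Perm (Fin n)) :
    ∑ φ : Perm (Fin n), enrichedCount ε S (permValue (φ * c * φ⁻¹)) =
      ∑ w ∈ words S n, #{φ : Perm (Fin n) | IsFixedPt (restandardize ε c w) φ} := by
  simp only [← isEnriched_conj_iff_isFixedPt]
  refine (sum_congr rfl fun φ _ => enrichedCount_eq_card_comp S _ φ⁻¹).trans ?_
  exact sum_card_bipartiteAbove_eq_sum_card_bipartiteBelow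
    fun (φ : Perm (Fin n)) (w : Fin n → α) => IsEnriched ε (permValue (φ * c * φ⁻¹)) (w ∘ ⇑φ⁻¹)

end Restandardize

section FixedPoints

theorem existsUnique_isFixedPt_of_iterate_eq {X : Type*} {T : X → X} {s : Set X}
    (hT : Set.MapsTo T s s) (hs : s.Nonempty) {N : ℕ}
    (hN : ∀ x ∈ s, ∀ y ∈ s, T^[N] x = T^[N] y) : ∃! x, IsFixedPt T x ∧ x ∈ s := by
  obtain ⟨x, hx⟩ := hs
  refine ⟨T^[N] x, ⟨?_, hT.iterate N hx⟩, fun y ⟨hfix, hy⟩ => ?_⟩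
  · rw [IsFixedPt, ← iterate_succ_apply' T, iterate_succ_apply]
    exact hN _ (hT hx) _ hx
  · exact (hfix.iterate N).symm.trans (hN y hy x hx)

/-- The letterwise left shift on sequences. -/
def shift {α : Type*} (u : ℕ → α) : ℕ → α := fun i => u (i + 1)

/-- The product of the signs of the first `r` letters of a sequence. -/
def wordSign {α : Type*} (ε : α → ℤˣ) (u : ℕ → α) (r : ℕ) : ℤˣ := ∏ j ∈ range r, ε (u j)

theorem iterate_shift_apply {α : Type*} (u : ℕ → α) (m i : ℕ) : shift^[m] u i = u (i + m) := by
  induction m generalizing u with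
  | zero => rfl
  | succ m ih => rw [iterate_succ_apply, ih, shift, add_assoc]

theorem wordSign_add {α : Type*} (ε : α → ℤˣ) (u : ℕ → α) (a b : ℕ) :
    wordSign ε u (a + b) = wordSign ε u a * wordSign ε (shift^[a] u) b := by
  simp only [wordSign, prod_range_add, iterate_shift_apply, add_comm _ a]

theorem wordSign_mul_of_isPeriodicPt {α : Type*} (ε : α → ℤˣ) {u : ℕ → α} {p : ℕ}
    (hu : IsPeriodicPt shift p u) (k : ℕ) : wordSign ε u (p * k) = wordSign ε u p ^ k := by
  induction k with
  | zero => simp only [mul_zero, pow_zero, wordSign, range_zero, prod_empty]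
  | succ k ih =>
    rw [mul_add_one, wordSign_add, ih, (hu.mul_const k).eq, pow_succ]

theorem exists_units_mul_sub_pos {x y : ℤ} (h : x ≠ y) : ∃ σ : ℤˣ, 0 < (σ : ℤ) * (y - x) := by
  rcases h.lt_or_gt with h | h
  · exact ⟨1, by rwa [Units.val_one, one_mul, sub_pos]⟩
  · exact ⟨-1, by rwa [Units.val_neg, Units.val_one, neg_one_mul, neg_sub, sub_pos]⟩

variable {α : Type*} {n : ℕ} {ε : α → ℤˣ} {c : Perm (Fin n)} {w : Fin n → α}

/-- The sequence of letters read along the orbit of `a` under `c`. -/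
def itinerary (c : Perm (Fin n)) (w : Fin n → α) (a : Fin n) : ℕ → α := fun r => w ((c ^ r) a)

theorem itinerary_pow_apply (c : Perm (Fin n)) (w : Fin n → α) (m : ℕ) (a : Fin n) :
    itinerary c w ((c ^ m) a) = shift^[m] (itinerary c w a) := by
  funext r
  simp only [iterate_shift_apply, itinerary, pow_add, Perm.mul_apply]

theorem itinerary_apply (c : Perm (Fin n)) (w : Fin n → α) (a : Fin n) :
    itinerary c w (c a) = shift (itinerary c w a) :=
  itinerary_pow_apply c w 1 a

theorem itinerary_eq_of_forall_lt_orderOf {a b : Fin n}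
    (h : ∀ r < orderOf c, itinerary c w a r = itinerary c w b r) :
    itinerary c w a = itinerary c w b := by
  funext r
  simpa only [itinerary, pow_mod_orderOf] using h (r % orderOf c) (Nat.mod_lt _ (orderOf_pos c))

theorem perm_eq_of_lt_iff_lt {φ ψ : Perm (Fin n)} (h : ∀ a b, φ a < φ b ↔ ψ a < ψ b) :
    φ = ψ := by
  have hmono (σ : Perm (Fin n)) (hσ : ∀ a b, φ a < φ b ↔ σ a < σ b) :
      StrictMono (φ ∘ ⇑σ⁻¹) := fun i j hij => by
    simpa only [comp_apply, hσ, Perm.coe_inv, Equiv.apply_symm_apply] using hij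
  have hsort (σ : Perm (Fin n)) (hσ : ∀ a b, φ a < φ b ↔ σ a < σ b) :
      σ⁻¹ = Tuple.sort φ := (strictMono_comp_iff_eq_sort φ.injective _).mp (hmono σ hσ)
  exact inv_injective ((hsort φ fun _ _ => .rfl).trans (hsort ψ h).symm)

/-- The permutations that arrange the points of each itinerary class in the order of `t`. -/
def compatiblePerms (c : Perm (Fin n)) (w : Fin n → α) (t : Fin n → ℤ) : Set (Perm (Fin n)) :=
  {φ | ∀ a b, itinerary c w a = itinerary c w b → (φ a < φ b ↔ t a < t b)}

theorem compatiblePerms_nonempty {t : Fin n → ℤ}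
    (ht : ∀ a b, itinerary c w a = itinerary c w b → t a = t b → a = b) :
    (compatiblePerms c w t).Nonempty := by
  have hg : Injective fun a => toLex (t a, a) := fun _ _ h =>
    (Prod.ext_iff.mp (toLex_inj.mp h)).2
  refine ⟨(Tuple.sort fun a => toLex (t a, a))⁻¹, fun a b hab => ?_⟩
  rw [inv_sort_lt_inv_sort hg, Prod.Lex.toLex_lt_toLex]
  exact or_iff_left fun ⟨h, hlt⟩ => hlt.ne (ht a b hab h)

variable [LinearOrder α]

theorem restandardize_lt_iff_of_eq {φ : Perm (Fin n)} {a b : Fin n} (hab : w a = w b) :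
    restandardize ε c w φ a < restandardize ε c w φ b ↔
      (ε (w a) : ℤ) * permValue φ (c a) < ε (w a) * permValue φ (c b) := by
  rw [restandardize_lt_iff, letterKey_lt_letterKey, hab]
  simp only [lt_irrefl, true_and, false_or]

theorem restandardize_lt_iff_congr {φ ψ : Perm (Fin n)} {a b : Fin n}
    (h : w a = w b → (φ (c a) < φ (c b) ↔ ψ (c a) < ψ (c b))) :
    restandardize ε c w φ a < restandardize ε c w φ b ↔
      restandardize ε c w ψ a < restandardize ε c w ψ b := by
  by_cases hab : w a = w b
  · have hflip (σ : Perm (Fin n)) :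
        σ (c b) < σ (c a) ↔ ¬ σ (c a) < σ (c b) ∧ σ (c a) ≠ σ (c b) := by
      rw [not_lt, ne_comm, lt_iff_le_and_ne]
    have hswap : φ (c b) < φ (c a) ↔ ψ (c b) < ψ (c a) := by
      rw [hflip, hflip, h hab, φ.injective.ne_iff, ψ.injective.ne_iff]
    rw [restandardize_lt_iff_of_eq hab, restandardize_lt_iff_of_eq hab]
    rcases Int.units_eq_one_or (ε (w a)) with hε | hε <;>
      simp only [hε, Units.val_one, Units.val_neg, one_mul, neg_mul, neg_lt_neg_iff,
        permValue_lt_permValue, h hab, hswap]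
  · simp only [restandardize_lt_iff, letterKey_lt_letterKey, hab, false_and, or_false]

theorem iterate_restandardize_lt_iff_congr {φ ψ : Perm (Fin n)} (k : ℕ) {a b : Fin n}
    (h : (∀ r < k, itinerary c w a r = itinerary c w b r) →
      (φ ((c ^ k) a) < φ ((c ^ k) b) ↔ ψ ((c ^ k) a) < ψ ((c ^ k) b))) :
    (restandardize ε c w)^[k] φ a < (restandardize ε c w)^[k] φ b ↔
      (restandardize ε c w)^[k] ψ a < (restandardize ε c w)^[k] ψ b := by
  induction k generalizing a b with
  | zero => exact h fun _ hr => absurd hr (Nat.not_lt_zero _)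
  | succ k ih =>
    simp only [iterate_succ_apply']
    refine restandardize_lt_iff_congr fun hab => ih fun hk => ?_
    refine h fun r hr => ?_
    cases r with
    | zero => exact hab
    | succ r => simpa only [itinerary_apply, shift] using hk r (Nat.lt_of_succ_lt_succ hr)

theorem mapsTo_restandardize_compatiblePerms {t : Fin n → ℤ}
    (ht : ∀ a, t (c a) = ε (w a) * t a) :
    Set.MapsTo (restandardize ε c w) (compatiblePerms c w t) (compatiblePerms c w t) := by
  intro φ hφ a b hab
  have hw : w a = w b := congrFun hab 0
  have hc : itinerary c w (c a) = itinerary c w (c b) := by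
    rw [itinerary_apply, itinerary_apply, hab]
  have hta := ht a
  have htb := ht b
  rw [← hw] at htb
  rw [restandardize_lt_iff_of_eq hw]
  rcases Int.units_eq_one_or (ε (w a)) with hε | hε <;>
    simp only [hε, Units.val_one, Units.val_neg, one_mul, neg_mul] at hta htb ⊢
  · rw [permValue_lt_permValue, hφ _ _ hc, hta, htb]
  · rw [neg_lt_neg_iff, permValue_lt_permValue, hφ _ _ hc.symm, hta, htb, neg_lt_neg_iff]

theorem existsUnique_isFixedPt_restandardize {t : Fin n → ℤ}
    (ht : ∀ a, t (c a) = ε (w a) * t a)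
    (hinj : ∀ a b, itinerary c w a = itinerary c w b → t a = t b → a = b) :
    ∃! φ, IsFixedPt (restandardize ε c w) φ ∧ φ ∈ compatiblePerms c w t := by
  refine existsUnique_isFixedPt_of_iterate_eq (N := orderOf c)
    (mapsTo_restandardize_compatiblePerms ht) (compatiblePerms_nonempty hinj)
    fun φ hφ ψ hψ => perm_eq_of_lt_iff_lt fun a b => ?_
  refine iterate_restandardize_lt_iff_congr _ fun h => ?_
  have hab := itinerary_eq_of_forall_lt_orderOf h
  rw [pow_orderOf_eq_one, Perm.one_apply, Perm.one_apply, hφ a b hab, hψ a b hab]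

theorem mul_sub_pos_iff_of_isFixedPt {φ : Perm (Fin n)}
    (hφ : IsFixedPt (restandardize ε c w) φ) {a b : Fin n} (hab : w a = w b) (σ : ℤˣ) :
    0 < (σ : ℤ) * (permValue φ b - permValue φ a) ↔
      0 < ((σ * ε (w a) : ℤˣ) : ℤ) * (permValue φ (c b) - permValue φ (c a)) := by
  have hstep {a b : Fin n} (hab : w a = w b) : permValue φ a < permValue φ b ↔
      (ε (w a) : ℤ) * permValue φ (c a) < ε (w a) * permValue φ (c b) := by
    rw [← restandardize_lt_iff_of_eq hab, hφ, permValue_lt_permValue]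
  have h₁ := hstep hab
  have h₂ := hstep hab.symm
  rw [← hab] at h₂
  rw [Units.val_mul, mul_assoc, mul_sub (ε (w a) : ℤ)]
  rcases Int.units_eq_one_or σ with rfl | rfl
  · simpa only [Units.val_one, one_mul, sub_pos] using h₁
  · simpa only [Units.val_neg, Units.val_one, neg_mul, one_mul, neg_sub, sub_pos] using h₂

theorem wordSign_mul_sub_pos_iff_of_isFixedPt {φ : Perm (Fin n)}
    (hφ : IsFixedPt (restandardize ε c w) φ) {a b : Fin n}
    (hab : itinerary c w a = itinerary c w b) (σ : ℤˣ) (k : ℕ) :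
    0 < (σ : ℤ) * (permValue φ b - permValue φ a) ↔
      0 < ((σ * wordSign ε (itinerary c w a) k : ℤˣ) : ℤ) *
        (permValue φ ((c ^ k) b) - permValue φ ((c ^ k) a)) := by
  induction k with
  | zero => simp only [wordSign, range_zero, prod_empty, mul_one, pow_zero, Perm.one_apply]
  | succ k ih =>
    rw [ih, mul_sub_pos_iff_of_isFixedPt hφ (congrFun hab k), wordSign, wordSign,
      prod_range_succ, mul_assoc, pow_succ', Perm.mul_apply, Perm.mul_apply]
    rfl

theorem pow_apply_eq_self_of_isFixedPt {φ : Perm (Fin n)}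
    (hφ : IsFixedPt (restandardize ε c w) φ) {a : Fin n} {m : ℕ}
    (hm : itinerary c w ((c ^ m) a) = itinerary c w a)
    (hsign : wordSign ε (itinerary c w a) m = 1) : (c ^ m) a = a := by
  by_contra hne
  obtain ⟨σ, hσ⟩ := exists_units_mul_sub_pos ((permValue_injective φ).ne hne).symm
  rw [itinerary_pow_apply] at hm
  have hmono : StrictMono fun k => (σ : ℤ) * permValue φ ((c ^ (m * k)) a) := by
    refine strictMono_nat_of_lt_succ fun k => ?_
    have hk := (wordSign_mul_sub_pos_iff_of_isFixedPt hφ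
      (hm.symm.trans (itinerary_pow_apply c w m a).symm) σ (m * k)).mp hσ
    rwa [wordSign_mul_of_isPeriodicPt ε hm, hsign, one_pow, mul_one, ← Perm.mul_apply, ← pow_add,
      ← mul_add_one, mul_sub, sub_pos] at hk
  have hcycle := hmono (orderOf_pos c)
  simp only [mul_comm m, pow_mul, pow_orderOf_eq_one, one_pow, zero_mul, pow_zero,
    lt_irrefl] at hcycle

end FixedPoints

section Rotation

variable {α : Type*} {n p : ℕ} {u : ℕ → α} {ε : α → ℤˣ}

theorem apply_finRotate_of_isPeriodicPt (hu : IsPeriodicPt shift n u) (i : Fin n) :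
    u (finRotate n i) = u (i + 1) := by
  cases n with
  | zero => exact i.elim0
  | succ m =>
    rcases eq_or_ne i (Fin.last m) with rfl | hi
    · have h : u (0 + (m + 1)) = u 0 := by rw [← iterate_shift_apply u, hu.eq]
      rw [finRotate_last, Fin.val_zero, Fin.val_last, ← h, zero_add]
    · rw [coe_finRotate_of_ne_last hi]

theorem apply_finRotate_pow_of_isPeriodicPt (hu : IsPeriodicPt shift n u) (k : ℕ) (i : Fin n) :
    u ((finRotate n ^ k) i) = u (i + k) := by
  induction k generalizing u with
  | zero => rfl
  | succ k ih =>
    rw [pow_succ', Perm.mul_apply, apply_finRotate_of_isPeriodicPt hu]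
    exact (ih (hu.apply_iterate 1)).trans (congrArg u (add_assoc _ _ _))

theorem coe_finRotate_pow_apply (k : ℕ) (i : Fin n) :
    ((finRotate n ^ k) i : ℕ) = (i + k) % n := by
  have hper : IsPeriodicPt shift n fun j : ℕ => j % n := by
    funext j
    rw [iterate_shift_apply, Nat.add_mod_right]
  rw [← apply_finRotate_pow_of_isPeriodicPt hper, Nat.mod_eq_of_lt (Fin.isLt _)]

theorem itinerary_finRotate (hu : IsPeriodicPt shift n u) (a : Fin n) :
    itinerary (finRotate n) (fun i => u i) a = shift^[a] u := by
  funext r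
  rw [itinerary, apply_finRotate_pow_of_isPeriodicPt hu, iterate_shift_apply, add_comm]

theorem iterate_eq_iterate_iff_modEq {X : Type*} {f : X → X} {x : X} (hx : x ∈ periodicPts f)
    {a b : ℕ} : f^[a] x = f^[b] x ↔ a ≡ b [MOD minimalPeriod f x] := by
  have hpos := minimalPeriod_pos_of_mem_periodicPts hx
  rw [← iterate_mod_minimalPeriod_eq (n := a), ← iterate_mod_minimalPeriod_eq (n := b)]
  exact iterate_eq_iterate_iff_of_lt_minimalPeriod (Nat.mod_lt _ hpos) (Nat.mod_lt _ hpos)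

theorem eq_or_eq_finRotate_pow_of_itinerary_eq (hp : minimalPeriod shift u = p) (hp0 : 0 < p)
    {a b : Fin (2 * p)}
    (hab : itinerary (finRotate (2 * p)) (fun i => u i) a =
      itinerary (finRotate (2 * p)) (fun i => u i) b) :
    b = a ∨ b = (finRotate (2 * p) ^ p) a := by
  have hper : IsPeriodicPt shift p u := hp ▸ isPeriodicPt_minimalPeriod shift u
  rw [itinerary_finRotate (hper.const_mul 2), itinerary_finRotate (hper.const_mul 2),
    iterate_eq_iterate_iff_modEq (mk_mem_periodicPts hp0 hper), hp] at hab
  have hmod (x : Fin (2 * p)) : (x : ℕ) = x % p ∧ (x : ℕ) < p ∨ (x : ℕ) = x % p + p := by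
    rcases lt_or_ge (x : ℕ) p with hx | hx
    · exact .inl ⟨(Nat.mod_eq_of_lt hx).symm, hx⟩
    · rw [Nat.mod_eq_sub_mod hx, Nat.mod_eq_of_lt (by omega)]
      omega
  have hrot : (a + p) % (2 * p) = if (a : ℕ) < p then a + p else a - p := by
    split_ifs with ha
    · exact Nat.mod_eq_of_lt (by omega)
    · rw [Nat.mod_eq_sub_mod (by omega), Nat.mod_eq_of_lt (by omega)]
      omega
  rw [Fin.ext_iff, Fin.ext_iff, coe_finRotate_pow_apply, hrot]
  have ha := hmod a
  have hb := hmod b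
  rw [← hab] at hb
  split_ifs <;> omega

theorem itinerary_finRotate_pow_apply (hu : IsPeriodicPt shift p u) (a : Fin (2 * p)) :
    itinerary (finRotate (2 * p)) (fun i => u i) ((finRotate (2 * p) ^ p) a) =
      itinerary (finRotate (2 * p)) (fun i => u i) a := by
  rw [itinerary_pow_apply, itinerary_finRotate (hu.const_mul 2), (hu.apply_iterate a).eq]

theorem isPeriodicPt_shift_wordSign (hu : IsPeriodicPt shift p u) (hs : wordSign ε u p = -1) :
    IsPeriodicPt shift (2 * p) (wordSign ε u) := by
  funext i
  rw [iterate_shift_apply, add_comm, wordSign_add, mul_comm 2,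
    wordSign_mul_of_isPeriodicPt ε hu, hs, Int.units_sq, one_mul, (hu.mul_const 2).eq]

theorem wordSign_finRotate_pow_apply (hu : IsPeriodicPt shift p u) (hs : wordSign ε u p = -1)
    (a : Fin (2 * p)) : wordSign ε u ((finRotate (2 * p) ^ p) a) = -wordSign ε u a := by
  rw [apply_finRotate_pow_of_isPeriodicPt (isPeriodicPt_shift_wordSign hu hs), add_comm,
    wordSign_add, hs, hu.eq, neg_one_mul]

theorem units_lt_neg_iff (η : ℤˣ) : (η : ℤ) < ((-η : ℤˣ) : ℤ) ↔ η = -1 := by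
  rcases Int.units_eq_one_or η with rfl | rfl <;> decide

/-- The orderings of the positions of a circular word `u` of length `2 * p` which put `a` before
the opposite position exactly if `θ` and the sign of the first `a` letters are opposite. -/
def orientedPerms (ε : α → ℤˣ) (u : ℕ → α) (p : ℕ) (θ : ℤˣ) : Set (Perm (Fin (2 * p))) :=
  compatiblePerms (finRotate (2 * p)) (fun i => u i) fun a => ((θ * wordSign ε u a : ℤˣ) : ℤ)

theorem mem_orientedPerms_iff (hp : minimalPeriod shift u = p) (hp0 : 0 < p)
    (hs : wordSign ε u p = -1) {φ : Perm (Fin (2 * p))} {θ : ℤˣ} : φ ∈ orientedPerms ε u p θ ↔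
      ∀ a, φ a < φ ((finRotate (2 * p) ^ p) a) ↔ θ * wordSign ε u a = -1 := by
  have hu : IsPeriodicPt shift p u := hp ▸ isPeriodicPt_minimalPeriod shift u
  have hlt (a : Fin (2 * p)) : ((θ * wordSign ε u a : ℤˣ) : ℤ) <
      ((θ * wordSign ε u ((finRotate (2 * p) ^ p) a) : ℤˣ) : ℤ) ↔ θ * wordSign ε u a = -1 := by
    rw [wordSign_finRotate_pow_apply hu hs, mul_neg, units_lt_neg_iff]
  refine ⟨fun h a => (h _ _ (itinerary_finRotate_pow_apply hu a).symm).trans (hlt a),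
    fun h a b hab => ?_⟩
  rcases eq_or_eq_finRotate_pow_of_itinerary_eq hp hp0 hab with rfl | rfl
  · simp only [lt_irrefl]
  · exact (h a).trans (hlt a).symm

variable [LinearOrder α]

/-- The number of orderings of the positions of the circular word `u 0, …, u (n - 1)` that
re-ranking by letter and then by the rank of the next position leaves unchanged. -/
def orderingCount (ε : α → ℤˣ) (n : ℕ) (u : ℕ → α) : ℕ :=
  #{φ : Perm (Fin n) | IsFixedPt (restandardize ε (finRotate n) fun i => u i) φ}

theorem orderingCount_of_minimalPeriod_eq (hn : 0 < n) (hu : minimalPeriod shift u = n) :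
    orderingCount ε n u = 1 := by
  have hper : IsPeriodicPt shift n u := hu ▸ isPeriodicPt_minimalPeriod shift u
  have hinj (a b : Fin n) (hab : itinerary (finRotate n) (fun i => u i) a =
      itinerary (finRotate n) (fun i => u i) b) : a = b := by
    rw [itinerary_finRotate hper, itinerary_finRotate hper,
      iterate_eq_iterate_iff_modEq (mk_mem_periodicPts hn hper), hu] at hab
    exact Fin.ext (hab.eq_of_lt_of_lt a.isLt b.isLt)
  have hcompat (φ : Perm (Fin n)) : φ ∈ compatiblePerms (finRotate n) (fun i => u i) 0 :=
    fun a b hab => by simp only [hinj a b hab, Pi.zero_apply, lt_irrefl]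
  have hunique := existsUnique_isFixedPt_restandardize (ε := ε) (c := finRotate n)
    (w := fun i => u i) (t := 0) (fun a => by simp only [Pi.zero_apply, mul_zero])
    (fun a b hab _ => hinj a b hab)
  simp only [hcompat, and_true] at hunique
  exact (Fintype.existsUnique_iff_card_one _).mp hunique

theorem dvd_of_isFixedPt_restandardize_finRotate (hn : 0 < n) (hu : IsPeriodicPt shift n u)
    {m : ℕ} (hm : IsPeriodicPt shift m u) (hsign : wordSign ε u m = 1) {φ : Perm (Fin n)}
    (hφ : IsFixedPt (restandardize ε (finRotate n) fun i => u i) φ) : n ∣ m := by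
  have hitin : itinerary (finRotate n) (fun i => u i) ⟨0, hn⟩ = u := itinerary_finRotate hu ⟨0, hn⟩
  have hfix : (finRotate n ^ m) ⟨0, hn⟩ = ⟨0, hn⟩ :=
    pow_apply_eq_self_of_isFixedPt hφ (by rw [itinerary_pow_apply, hitin, hm.eq])
      (by rw [hitin, hsign])
  have hval := congrArg Fin.val hfix
  rw [coe_finRotate_pow_apply, zero_add] at hval
  exact Nat.dvd_of_mod_eq_zero hval

theorem eq_or_eq_two_mul_of_orderingCount_ne_zero (hn : 0 < n) (hu : IsPeriodicPt shift n u)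
    (h : orderingCount ε n u ≠ 0) :
    n = minimalPeriod shift u ∨
      n = 2 * minimalPeriod shift u ∧ wordSign ε u (minimalPeriod shift u) = -1 := by
  obtain ⟨φ, hφ⟩ := card_ne_zero.mp h
  have hφ := (mem_filter.mp hφ).2
  set p := minimalPeriod shift u
  have hp : IsPeriodicPt shift p u := isPeriodicPt_minimalPeriod shift u
  obtain ⟨k, rfl⟩ : p ∣ n := hu.minimalPeriod_dvd
  have hp0 : 0 < p := Nat.pos_of_mul_pos_right hn
  rcases Int.units_eq_one_or (wordSign ε u p) with hs | hs
  · have hdvd := dvd_of_isFixedPt_restandardize_finRotate hn hu hp hs hφ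
    exact .inl (Nat.dvd_antisymm hdvd (dvd_mul_right p k))
  · have hdvd := dvd_of_isFixedPt_restandardize_finRotate hn hu (hp.mul_const 2)
      (by rw [wordSign_mul_of_isPeriodicPt ε hp, Int.units_sq]) hφ
    have hk : k ∣ 2 := Nat.dvd_of_mul_dvd_mul_left hp0 hdvd
    rcases (Nat.dvd_prime Nat.prime_two).mp hk with rfl | rfl
    · exact .inl (mul_one p)
    · exact .inr ⟨mul_comm p 2, hs⟩

theorem existsUnique_isFixedPt_orientedPerms (hp : minimalPeriod shift u = p) (hp0 : 0 < p)
    (hs : wordSign ε u p = -1) (θ : ℤˣ) :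
    ∃! φ, IsFixedPt (restandardize ε (finRotate (2 * p)) fun i => u i) φ ∧
      φ ∈ orientedPerms ε u p θ := by
  have hu : IsPeriodicPt shift p u := hp ▸ isPeriodicPt_minimalPeriod shift u
  refine existsUnique_isFixedPt_restandardize (fun a => ?_) fun a b hab hθ => ?_
  · rw [apply_finRotate_of_isPeriodicPt (isPeriodicPt_shift_wordSign hu hs), wordSign,
      prod_range_succ, ← mul_assoc, mul_comm, Units.val_mul]
    rfl
  · rcases eq_or_eq_finRotate_pow_of_itinerary_eq hp hp0 hab with rfl | rfl
    · rfl
    · rw [wordSign_finRotate_pow_apply hu hs, Units.val_inj, mul_right_inj] at hθ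
      exact absurd hθ (units_ne_neg_self _)

theorem exists_mem_orientedPerms (hp : minimalPeriod shift u = p) (hp0 : 0 < p)
    (hs : wordSign ε u p = -1) {φ : Perm (Fin (2 * p))}
    (hφ : IsFixedPt (restandardize ε (finRotate (2 * p)) fun i => u i) φ) :
    ∃ θ : ℤˣ, φ ∈ orientedPerms ε u p θ := by
  have hu : IsPeriodicPt shift p u := hp ▸ isPeriodicPt_minimalPeriod shift u
  set c := finRotate (2 * p) with hc
  let o : Fin (2 * p) := ⟨0, by omega⟩
  have hpow (a : Fin (2 * p)) : (c ^ (a : ℕ)) o = a := by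
    rw [Fin.ext_iff, hc, coe_finRotate_pow_apply, zero_add, Nat.mod_eq_of_lt a.isLt]
  have hne : (c ^ p) o ≠ o := by
    rw [Ne, Fin.ext_iff, hc, coe_finRotate_pow_apply, zero_add, Nat.mod_eq_of_lt (by omega)]
    exact hp0.ne'
  obtain ⟨σ, hσ⟩ := exists_units_mul_sub_pos ((permValue_injective φ).ne hne).symm
  have hσ' (a : Fin (2 * p)) : 0 < ((σ * wordSign ε u a : ℤˣ) : ℤ) *
      (permValue φ ((c ^ p) a) - permValue φ a) := by
    have h := (wordSign_mul_sub_pos_iff_of_isFixedPt hφ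
      (itinerary_finRotate_pow_apply hu o).symm σ a).mp hσ
    rwa [itinerary_finRotate (hu.const_mul 2), ← Perm.mul_apply, pow_mul_comm, Perm.mul_apply,
      hpow] at h
  refine ⟨-σ, (mem_orientedPerms_iff hp hp0 hs).mpr fun a => ?_⟩
  have h := hσ' a
  rw [← permValue_lt_permValue, neg_mul, neg_inj]
  rcases Int.units_eq_one_or (σ * wordSign ε u a) with hη | hη
  · simpa only [hη, iff_true, Units.val_one, one_mul, sub_pos] using h
  · rw [hη, Units.val_neg, Units.val_one, neg_one_mul, neg_sub, sub_pos] at h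
    exact iff_of_false h.not_gt (by rw [hη]; decide)

/-- Halfway around the circle the sign flips, so an invariant ordering is determined by how it
orders one pair of opposite positions, and both choices occur. -/
theorem orderingCount_two_mul_minimalPeriod (hp : minimalPeriod shift u = p) (hp0 : 0 < p)
    (hs : wordSign ε u p = -1) : orderingCount ε (2 * p) u = 2 := by
  choose Φ hΦ hΦu using existsUnique_isFixedPt_orientedPerms (ε := ε) hp hp0 hs
  have hinj : Injective Φ := fun θ θ' h => by
    have h₁ := (mem_orientedPerms_iff hp hp0 hs).mp (hΦ θ).2 ⟨0, by omega⟩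
    have h₂ := (mem_orientedPerms_iff hp hp0 hs).mp (hΦ θ').2 ⟨0, by omega⟩
    simp only [h, h₂, wordSign, range_zero, prod_empty, mul_one] at h₁
    rcases Int.units_eq_one_or θ with rfl | rfl
    · exact ((Int.units_eq_one_or θ').resolve_right fun h => absurd (h₁.mp h) (by decide)).symm
    · exact (h₁.mpr rfl).symm
  have himage : ({φ | IsFixedPt (restandardize ε (finRotate (2 * p)) fun i => u i) φ} :
      Finset (Perm (Fin (2 * p)))) = univ.image Φ := by
    ext φ
    simp only [mem_filter, mem_univ, true_and, mem_image]
    refine ⟨fun hφ => ?_, by rintro ⟨θ, rfl⟩; exact (hΦ θ).1⟩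
    obtain ⟨θ, hθ⟩ := exists_mem_orientedPerms hp hp0 hs hφ
    exact ⟨θ, (hΦu θ φ ⟨hφ, hθ⟩).symm⟩
  rw [orderingCount, himage, card_image_of_injective _ hinj, card_univ, Fintype.card_units_int]

theorem orderingCount_eq (hn : 0 < n) (hu : IsPeriodicPt shift n u) :
    (orderingCount ε n u : ℤ) = (if n = minimalPeriod shift u then 1 else 0) +
      if n = 2 * minimalPeriod shift u then 1 - (wordSign ε u (minimalPeriod shift u) : ℤ)
      else 0 := by
  have hne : orderingCount ε n u ≠ 0 → _ := eq_or_eq_two_mul_of_orderingCount_ne_zero hn hu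
  by_cases h₁ : n = minimalPeriod shift u
  · rw [orderingCount_of_minimalPeriod_eq hn h₁.symm, if_pos h₁, if_neg (by omega)]
    rfl
  · rw [if_neg h₁, zero_add]
    split_ifs with h₂
    · rcases Int.units_eq_one_or (wordSign ε u (minimalPeriod shift u)) with hs | hs
      · have h0 : orderingCount ε n u = 0 := not_not.mp fun h =>
          (hne h).elim h₁ fun h => absurd (hs.symm.trans h.2) (by decide)
        rw [h0, hs]
        rfl
      · rw [h₂, orderingCount_two_mul_minimalPeriod rfl (by omega) hs, hs]
        rfl
    · exact_mod_cast not_not.mp fun h => (hne h).elim h₁ fun h => h₂ h.1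

end Rotation

section PeriodicWords

variable {α : Type*} {n : ℕ} {S : Finset α}

/-- The infinite repetition of a nonempty finite word. -/
def unroll [NeZero n] (w : Fin n → α) (i : ℕ) : α := w (Fin.ofNat n i)

theorem unroll_val [NeZero n] (w : Fin n → α) (i : Fin n) : unroll w i = w i :=
  congrArg w (Fin.ofNat_val_eq_self i)

theorem unroll_injective [NeZero n] : Injective (unroll : (Fin n → α) → ℕ → α) :=
  fun w w' h => funext fun i => by rw [← unroll_val w, h, unroll_val]

/-- The sequences over the alphabet `S` with period `n`. -/
def periodicWords (S : Finset α) (n : ℕ) [NeZero n] : Finset (ℕ → α) := (words S n).image unroll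

theorem mem_periodicWords [NeZero n] {u : ℕ → α} :
    u ∈ periodicWords S n ↔ IsPeriodicPt shift n u ∧ ∀ i, u i ∈ S := by
  simp only [periodicWords, mem_image, Fintype.mem_piFinset]
  constructor
  · rintro ⟨w, hw, rfl⟩
    refine ⟨funext fun i => ?_, fun i => hw _⟩
    rw [iterate_shift_apply]
    exact congrArg w (Fin.ext (Nat.add_mod_right i n))
  · rintro ⟨hper, hS⟩
    refine ⟨fun i => u i, fun i => hS i, funext fun i => ?_⟩
    have h := congrFun (hper.iterate_mod_apply i) 0
    rwa [iterate_shift_apply, iterate_shift_apply, zero_add, zero_add] at h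

theorem periodicWords_filter [NeZero n] {m : ℕ} [NeZero m] (hm : m ∣ n) :
    {u ∈ periodicWords S n | IsPeriodicPt shift m u} = periodicWords S m := by
  ext u
  simp only [mem_filter, mem_periodicWords]
  exact ⟨fun h => ⟨h.2, h.1.2⟩, fun h => ⟨⟨h.1.trans_dvd hm, h.2⟩, h.1⟩⟩

theorem sum_periodicWords [NeZero n] {M : Type*} [AddCommMonoid M] (G : (Fin n → α) → M) :
    ∑ u ∈ periodicWords S n, G (fun i => u i) = ∑ w ∈ words S n, G w := by
  rw [periodicWords, sum_image unroll_injective.injOn]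
  simp only [unroll_val]

theorem card_periodicWords [NeZero n] : #(periodicWords S n) = #S ^ n := by
  rw [periodicWords, card_image_of_injective _ unroll_injective, Fintype.card_piFinset_const]

theorem sum_wordSign_periodicWords [NeZero n] {ε : α → ℤˣ} :
    ∑ u ∈ periodicWords S n, (wordSign ε u n : ℤ) = (∑ a ∈ S, (ε a : ℤ)) ^ n := by
  simp only [wordSign, prod_range, Units.coe_prod]
  rw [sum_periodicWords fun w => ∏ i, (ε (w i) : ℤ), sum_pow']

theorem sum_half_period_wordSign [NeZero n] {ε : α → ℤˣ}
    (hε : ∑ a ∈ S, (ε a : ℤ) = 0) :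
    ∑ u ∈ periodicWords S n, (if 2 ∣ n ∧ IsPeriodicPt shift (n / 2) u then
      (wordSign ε u (n / 2) : ℤ) else 0) = 0 := by
  by_cases h : 2 ∣ n
  · have hpos : 0 < n / 2 := Nat.div_pos (Nat.le_of_dvd (NeZero.pos n) h) two_pos
    have : NeZero (n / 2) := ⟨hpos.ne'⟩
    simp only [h, true_and]
    rw [← sum_filter, periodicWords_filter (Nat.div_dvd_of_dvd h), sum_wordSign_periodicWords, hε,
      zero_pow hpos.ne']
  · simp only [h, false_and, if_false, sum_const_zero]

variable [LinearOrder α] {ε : α → ℤˣ}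

/-- The number of pairs of a labelled `n`-cycle and an enriched word for it. -/
def rotationCount (ε : α → ℤˣ) (S : Finset α) (n : ℕ) : ℕ :=
  ∑ φ : Perm (Fin n), enrichedCount ε S (permValue (φ * finRotate n * φ⁻¹))

theorem rotationCount_eq_sum_orderingCount [NeZero n] :
    rotationCount ε S n = ∑ u ∈ periodicWords S n, orderingCount ε n u := by
  rw [rotationCount, sum_enrichedCount_conj]
  exact (sum_periodicWords _).symm

end PeriodicWords

section OddDivisors

theorem sum_odd_divisors_ite_div_eq {M : Type*} [AddCommMonoid M] {m r : ℕ} (hm : 0 < m)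
    (hr : 0 < r) (x : M) :
    ∑ d ∈ (m * r).divisors with Odd d, (if m * r / d = m then x else 0) =
      if Odd r then x else 0 := by
  have hdiv {d : ℕ} (hd : d ∈ ({d ∈ (m * r).divisors | Odd d} : Finset ℕ)) :
      m * r / d = m ↔ d = r := by
    have hd' := Nat.dvd_of_mem_divisors (mem_of_mem_filter d hd)
    rw [Nat.div_eq_iff_eq_mul_left (Nat.pos_of_dvd_of_pos hd' (mul_pos hm hr)) hd',
      Nat.mul_right_inj hm.ne', eq_comm]
  rw [sum_congr rfl fun d hd => if_congr (hdiv hd) rfl rfl, sum_ite_eq']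
  refine if_congr ?_ rfl rfl
  rw [mem_filter, Nat.mem_divisors]
  exact and_iff_right ⟨dvd_mul_left r m, (mul_pos hm hr).ne'⟩

theorem eq_sum_odd_divisors_moebius_mul {R : Type*} [Ring R] {f g : ℕ → R}
    (h : ∀ n, 0 < n → ∑ d ∈ n.divisors with Odd d, f (n / d) = g n) {n : ℕ} (hn : 0 < n) :
    f n = ∑ d ∈ n.divisors with Odd d, (ArithmeticFunction.moebius d : R) * g (n / d) := by
  obtain ⟨s, j, hj, rfl⟩ := Nat.exists_eq_two_pow_mul_odd hn.ne'
  have hodd {i : ℕ} (hi : Odd i) : {d ∈ (2 ^ s * i).divisors | Odd d} = i.divisors := by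
    ext d
    simp only [mem_filter, Nat.mem_divisors]
    refine ⟨fun ⟨⟨hd, _⟩, hdo⟩ => ⟨?_, hi.pos.ne'⟩, fun ⟨hd, _⟩ =>
      ⟨⟨hd.mul_left _, (mul_pos (Nat.two_pow_pos s) hi.pos).ne'⟩, hi.of_dvd_nat hd⟩⟩
    exact (Nat.coprime_two_right.mpr hdo).pow_right s |>.dvd_of_dvd_mul_left hd
  have hsum (F : ℕ → ℕ → R) {i : ℕ} (hi : Odd i) :
      ∑ d ∈ (2 ^ s * i).divisors with Odd d, F d (2 ^ s * i / d) =
        ∑ d ∈ i.divisors, F d (2 ^ s * (i / d)) := by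
    rw [hodd hi]
    exact sum_congr rfl fun d hd => by rw [Nat.mul_div_assoc _ (Nat.dvd_of_mem_divisors hd)]
  rw [hsum (fun d m => (ArithmeticFunction.moebius d : R) * g m) hj,
    ← Nat.sum_divisorsAntidiagonal fun a b => (ArithmeticFunction.moebius a : R) * g (2 ^ s * b)]
  refine ((ArithmeticFunction.sum_eq_iff_sum_mul_moebius_eq_on (f := fun i => f (2 ^ s * i))
    (g := fun i => g (2 ^ s * i)) {i | Odd i} fun m i hmi hi => Odd.of_dvd_nat hi hmi).mp
    (fun i _ hi => ?_) j hj.pos hj).symm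
  rw [← h _ (mul_pos (Nat.two_pow_pos s) hi.pos), hsum (fun _ m => f m) hi,
    Nat.sum_div_divisors i fun m => f (2 ^ s * m)]

end OddDivisors

section RotationCount

variable {α : Type*} [LinearOrder α] {ε : α → ℤˣ} {S : Finset α} {n : ℕ}

theorem ite_isPeriodicPt_orderingCount {u : ℕ → α} (hn : 0 < n) :
    (if IsPeriodicPt shift n u then (orderingCount ε n u : ℤ) else 0) =
      (if n = minimalPeriod shift u then 1 else 0) +
        if n = 2 * minimalPeriod shift u then 1 - (wordSign ε u (minimalPeriod shift u) : ℤ)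
        else 0 := by
  have hper : IsPeriodicPt shift (minimalPeriod shift u) u := isPeriodicPt_minimalPeriod shift u
  by_cases h : IsPeriodicPt shift n u
  · rw [if_pos h, orderingCount_eq hn h]
  · have h₁ : n ≠ minimalPeriod shift u := fun h₁ => h (h₁ ▸ hper)
    have h₂ : n ≠ 2 * minimalPeriod shift u := fun h₂ => h (h₂ ▸ hper.const_mul 2)
    rw [if_neg h, if_neg h₁, if_neg h₂, add_zero]

theorem sum_orderingCount_add_wordSign {u : ℕ → α} (hn : 0 < n) (hu : IsPeriodicPt shift n u) :
    (∑ d ∈ n.divisors with Odd d,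
        if IsPeriodicPt shift (n / d) u then (orderingCount ε (n / d) u : ℤ) else 0) +
      (if 2 ∣ n ∧ IsPeriodicPt shift (n / 2) u then (wordSign ε u (n / 2) : ℤ) else 0) = 1 := by
  obtain ⟨r, rfl⟩ := hu.minimalPeriod_dvd
  have hper : IsPeriodicPt shift (minimalPeriod shift u) u := isPeriodicPt_minimalPeriod shift u
  set p := minimalPeriod shift u with hp
  have hp0 : 0 < p := Nat.pos_of_mul_pos_right hn
  have hr0 : 0 < r := Nat.pos_of_mul_pos_left hn
  rw [sum_congr rfl fun d hd => ite_isPeriodicPt_orderingCount (Nat.div_pos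
    (Nat.le_of_dvd hn (Nat.dvd_of_mem_divisors (mem_of_mem_filter d hd)))
    (Nat.pos_of_mem_divisors (mem_of_mem_filter d hd))), sum_add_distrib,
    sum_odd_divisors_ite_div_eq hp0 hr0]
  rcases Nat.even_or_odd' r with ⟨k, rfl | rfl⟩
  · have hk : p * (2 * k) / 2 = p * k := by
      rw [mul_left_comm, Nat.mul_div_cancel_left _ two_pos]
    rw [hk, if_neg (Nat.not_odd_iff_even.mpr (even_two_mul k)),
      if_pos ⟨⟨p * k, by ring⟩, hper.mul_const k⟩, ← mul_assoc, mul_comm p 2,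
      sum_odd_divisors_ite_div_eq (by omega) (by omega), wordSign_mul_of_isPeriodicPt ε hper]
    rcases Nat.even_or_odd k with hk | hk
    · rw [if_neg (Nat.not_odd_iff_even.mpr hk), Int.units_pow_eq_pow_mod_two,
        Nat.even_iff.mp hk, pow_zero, add_zero, zero_add, Units.val_one]
    · rw [if_pos hk, Int.units_pow_eq_pow_mod_two, Nat.odd_iff.mp hk, pow_one]
      rw [zero_add, sub_add_cancel]
  · have hne (d : ℕ) : p * (2 * k + 1) ≠ d * (2 * p) := fun h => by
      have : 2 * k + 1 = d * 2 := mul_left_cancel₀ hp0.ne' (h.trans (by ring))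
      omega
    rw [if_pos (odd_two_mul_add_one k), sum_eq_zero fun d hd => if_neg fun h => ?_, if_neg ?_]
    · rfl
    · rintro ⟨h₂, h⟩
      obtain ⟨c, hc⟩ := h.minimalPeriod_dvd
      refine hne c ?_
      rw [← Nat.div_mul_cancel h₂, hc, ← hp]
      ring
    · refine hne d ?_
      rw [← Nat.div_mul_cancel (Nat.dvd_of_mem_divisors (mem_of_mem_filter d hd)), h, mul_comm]

theorem sum_odd_divisors_rotationCount (hε : ∑ a ∈ S, (ε a : ℤ) = 0) (hn : 0 < n) :
    ∑ d ∈ n.divisors with Odd d, (rotationCount ε S (n / d) : ℤ) = #S ^ n := by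
  have : NeZero n := ⟨hn.ne'⟩
  have hcount {m : ℕ} (hm : m ∣ n) : (rotationCount ε S m : ℤ) =
      ∑ u ∈ periodicWords S n, if IsPeriodicPt shift m u then (orderingCount ε m u : ℤ) else 0 := by
    have : NeZero m := ⟨(Nat.pos_of_dvd_of_pos hm hn).ne'⟩
    rw [rotationCount_eq_sum_orderingCount, Nat.cast_sum, ← sum_filter, periodicWords_filter hm]
  calc ∑ d ∈ n.divisors with Odd d, (rotationCount ε S (n / d) : ℤ)
      = ∑ u ∈ periodicWords S n, ∑ d ∈ n.divisors with Odd d,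
          if IsPeriodicPt shift (n / d) u then (orderingCount ε (n / d) u : ℤ) else 0 := by
        rw [sum_comm]
        exact sum_congr rfl fun d hd =>
          hcount (Nat.div_dvd_of_dvd (Nat.dvd_of_mem_divisors (mem_of_mem_filter d hd)))
    _ = ∑ _ ∈ periodicWords S n, (1 : ℤ) := by
        rw [← sum_congr rfl fun _ hu =>
          sum_orderingCount_add_wordSign (ε := ε) hn (mem_periodicWords.mp hu).1,
          sum_add_distrib, sum_half_period_wordSign hε, add_zero]
    _ = #S ^ n := by
        rw [sum_const, card_periodicWords, nsmul_one, Nat.cast_pow]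

theorem rotationCount_eq (hε : ∑ a ∈ S, (ε a : ℤ) = 0) (hn : 0 < n) :
    (rotationCount ε S n : ℤ) =
      ∑ d ∈ n.divisors with Odd d, ArithmeticFunction.moebius d * (#S : ℤ) ^ (n / d) := by
  simpa only [Int.cast_id] using
    eq_sum_odd_divisors_moebius_mul (f := fun n => (rotationCount ε S n : ℤ))
      (g := fun n => (#S : ℤ) ^ n) (fun _ h => sum_odd_divisors_rotationCount hε h) hn

end RotationCount

section Cyclic

theorem sum_conj_eq_card_centralizer_nsmul {G M : Type*} [Group G] [Fintype G] [AddCommMonoid M]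
    (x : G) [DecidablePred (IsConj x)] (F : G → M) :
    ∑ g, F (g * x * g⁻¹) = Nat.card (Subgroup.centralizer {x}) • ∑ y with IsConj x y, F y := by
  have himage : univ.image (fun g => g * x * g⁻¹) = ({y | IsConj x y} : Finset G) := by
    ext y
    simp only [mem_image, mem_univ, true_and, mem_filter, isConj_iff]
  have hfiber {y : G} (hy : IsConj x y) :
      #{g | g * x * g⁻¹ = y} = Nat.card (Subgroup.centralizer {x}) := by
    obtain ⟨τ, rfl⟩ := isConj_iff.mp hy
    rw [Nat.card_eq_fintype_card, Fintype.card_subtype]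
    refine card_equiv (Equiv.mulLeft τ⁻¹) fun g => ?_
    simp only [mem_filter, mem_univ, true_and, Equiv.coe_mulLeft,
      Subgroup.mem_centralizer_singleton_iff]
    rw [mul_inv_eq_iff_eq_mul, mul_assoc τ⁻¹, inv_mul_eq_iff_eq_mul]
    simp only [mul_assoc]
  rw [sum_comp F fun g => g * x * g⁻¹, himage, smul_sum]
  exact sum_congr rfl fun y hy => by rw [hfiber (mem_filter.mp hy).2]

variable {n : ℕ}

theorem parts_partition_finRotate (hn : 0 < n) : (finRotate n).partition.parts = {n} := by
  obtain rfl | hn := (Nat.succ_le_of_lt hn).eq_or_lt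
  · rw [Perm.parts_partition, Subsingleton.elim (finRotate 1) 1]
    simp
  · rw [Perm.parts_partition, cycleType_finRotate_of_le hn, support_finRotate_of_le hn, card_univ,
      Nat.sub_self, Multiset.replicate_zero, add_zero]

theorem mem_cyclicSet_iff_isConj (hn : 0 < n) {π : Perm (Fin n)} :
    π ∈ cyclicSet n ↔ IsConj (finRotate n) π := by
  have hparts : fullCycleType n π = π.partition.parts := by
    rw [fullCycleType, Perm.parts_partition, Fintype.card_fin]
  rw [cyclicSet, mem_filter, IsCyclicPerm, Perm.partition_eq_of_isConj, Nat.Partition.ext_iff,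
    parts_partition_finRotate hn, hparts, eq_comm]
  exact and_iff_right (mem_univ π)

theorem card_centralizer_finRotate (hn : 0 < n) :
    Nat.card (Subgroup.centralizer {finRotate n}) = n := by
  obtain rfl | hn := (Nat.succ_le_of_lt hn).eq_or_lt
  · rw [Perm.nat_card_centralizer, Subsingleton.elim (finRotate 1) 1]
    simp
  · rw [Perm.nat_card_centralizer, cycleType_finRotate_of_le hn]
    simp

theorem rotationCount_eq_mul_sum {α : Type*} [LinearOrder α] {ε : α → ℤˣ} {S : Finset α}
    (hn : 0 < n) :
    rotationCount ε S n = n * ∑ π ∈ cyclicSet n, enrichedCount ε S (permValue π) := by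
  have hclass : ({π | IsConj (finRotate n) π} : Finset (Perm (Fin n))) = cyclicSet n := by
    ext π
    rw [mem_filter, mem_cyclicSet_iff_isConj hn]
    exact and_iff_right (mem_univ π)
  rw [rotationCount, sum_conj_eq_card_centralizer_nsmul (finRotate n)
    fun π => enrichedCount ε S (permValue π), card_centralizer_finRotate hn, smul_eq_mul, hclass]

theorem mul_sum_enrichedCount_cyclicSet {α : Type*} [LinearOrder α] {ε : α → ℤˣ} {S : Finset α}
    (hε : ∑ a ∈ S, (ε a : ℤ) = 0) (hn : 0 < n) :
    (n : ℤ) * ∑ π ∈ cyclicSet n, (enrichedCount ε S (permValue π) : ℤ) =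
      ∑ d ∈ n.divisors with Odd d, ArithmeticFunction.moebius d * (#S : ℤ) ^ (n / d) := by
  rw [← rotationCount_eq hε hn, rotationCount_eq_mul_sum hn, Nat.cast_mul, Nat.cast_sum]

end Cyclic

section Recursion

variable {i K : ℕ} {ε : ℕ → ℤˣ}

theorem isEnriched_iff_init {α : Type*} [LinearOrder α] {ε : α → ℤˣ} {p : Fin (i + 2) → ℤ}
    {f : Fin (i + 2) → α} :
    IsEnriched ε p f ↔ IsEnriched ε (Fin.init p) (Fin.init f) ∧
      letterKey ε (f (Fin.last i).castSucc) (p (Fin.last i).castSucc) <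
        letterKey ε (f (Fin.last (i + 1))) (p (Fin.last (i + 1))) := by
  simp only [IsEnriched, Fin.strictMono_iff_lt_succ]
  exact Fin.forall_fin_succ'

theorem IsEnriched.le_last {α : Type*} [LinearOrder α] {ε : α → ℤˣ} {p : Fin (i + 1) → ℤ}
    {f : Fin (i + 1) → α} (hf : IsEnriched ε p f) (j : Fin (i + 1)) : f j ≤ f (Fin.last i) := by
  obtain rfl | hj := (Fin.le_last j).eq_or_lt
  · exact le_rfl
  · exact (letterKey_lt_letterKey.mp (hf hj)).elim le_of_lt fun h => h.1.le

theorem mem_words_range_filter_isEnriched {p : Fin (i + 1) → ℤ} {f : Fin (i + 1) → ℕ} :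
    f ∈ {f ∈ words (range K) (i + 1) | IsEnriched ε p f} ↔
      IsEnriched ε p f ∧ f (Fin.last i) < K := by
  simp only [mem_filter, Fintype.mem_piFinset, mem_range]
  exact ⟨fun h => ⟨h.2, h.1 _⟩, fun h => ⟨fun j => (h.1.le_last j).trans_lt h.2, h.1⟩⟩

theorem isEnriched_snoc_iff {p : Fin (i + 2) → ℤ} {g : Fin (i + 1) → ℕ} :
    IsEnriched ε p (Fin.snoc g K : Fin (i + 2) → ℕ) ↔ IsEnriched ε (Fin.init p) g ∧
      g (Fin.last i) < if (ε K : ℤ) * p (Fin.last i).castSucc < ε K * p (Fin.last (i + 1))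
        then K + 1 else K := by
  rw [isEnriched_iff_init, Fin.init_snoc, Fin.snoc_castSucc, Fin.snoc_last,
    letterKey_lt_letterKey]
  refine and_congr_right fun _ => ?_
  split_ifs with h <;> grind

theorem enrichedCount_range_succ (p : Fin (i + 2) → ℤ) :
    enrichedCount ε (range (K + 1)) p = enrichedCount ε (range K) p +
      enrichedCount ε (range (if (ε K : ℤ) * p (Fin.last i).castSucc < ε K * p (Fin.last (i + 1))
        then K + 1 else K)) (Fin.init p) := by
  have hlt : {f ∈ {f ∈ words (range (K + 1)) (i + 2) | IsEnriched ε p f} |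
      f (Fin.last (i + 1)) < K} = {f ∈ words (range K) (i + 2) | IsEnriched ε p f} := by
    ext f
    rw [mem_filter, mem_words_range_filter_isEnriched, mem_words_range_filter_isEnriched]
    exact ⟨fun h => ⟨h.1.1, h.2⟩, fun h => ⟨⟨h.1, h.2.trans K.lt_succ_self⟩, h.2⟩⟩
  have hsnoc {f : Fin (i + 2) → ℕ} (hle : f (Fin.last (i + 1)) < K + 1)
      (hge : ¬ f (Fin.last (i + 1)) < K) : Fin.snoc (α := fun _ => ℕ) (Fin.init f) K = f := by
    rw [← (Nat.lt_succ_iff_lt_or_eq.mp hle).resolve_left hge, Fin.snoc_init_self]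
  rw [enrichedCount, ← card_filter_add_card_filter_not fun f : Fin (i + 2) → ℕ =>
    f (Fin.last (i + 1)) < K, hlt]
  refine congrArg _ (card_bij' (fun f _ => Fin.init f) (fun g _ => Fin.snoc (α := fun _ => ℕ) g K)
    (fun f hf => ?_) (fun g hg => ?_) (fun f hf => ?_) fun g _ => Fin.init_snoc _ _)
  · rw [mem_filter, mem_words_range_filter_isEnriched] at hf
    rw [mem_words_range_filter_isEnriched, ← isEnriched_snoc_iff, hsnoc hf.1.2 hf.2]
    exact hf.1.1
  · rw [mem_words_range_filter_isEnriched, ← isEnriched_snoc_iff] at hg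
    rw [mem_filter, mem_words_range_filter_isEnriched, Fin.snoc_last]
    exact ⟨⟨hg, K.lt_succ_self⟩, K.lt_irrefl⟩
  · rw [mem_filter, mem_words_range_filter_isEnriched] at hf
    exact hsnoc hf.1.2 hf.2

theorem enrichedCount_empty {α : Type*} [LinearOrder α] {ε : α → ℤˣ} (p : Fin (i + 1) → ℤ) :
    enrichedCount ε ∅ p = 0 := by
  rw [enrichedCount, card_eq_zero, words, Fintype.piFinset_empty, filter_empty]

theorem enrichedCount_one {α : Type*} [LinearOrder α] {ε : α → ℤˣ} {S : Finset α}
    (p : Fin 1 → ℤ) : enrichedCount ε S p = #S := by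
  rw [enrichedCount, filter_true_of_mem (p := IsEnriched ε p) fun f _ => Subsingleton.strictMono _,
    Fintype.card_piFinset_const, pow_one]

end Recursion

section AlternatingSeries

open PowerSeries

/-- The signs of the alphabet `ℕ`, which is read as `0⁻ < 1⁺ < 2⁻ < 3⁺ < ⋯`. -/
def alternatingSign (a : ℕ) : ℤˣ := (-1) ^ (a + 1)

theorem alternatingSign_two_mul (k : ℕ) : alternatingSign (2 * k) = -1 := by
  rw [alternatingSign, pow_succ, pow_mul, neg_one_sq, one_pow, one_mul]

theorem alternatingSign_two_mul_add_one (k : ℕ) : alternatingSign (2 * k + 1) = 1 := by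
  rw [alternatingSign, add_assoc, ← mul_add_one, pow_mul, neg_one_sq, one_pow]

theorem sum_range_alternatingSign (k : ℕ) :
    ∑ a ∈ range (2 * k), (alternatingSign a : ℤ) = 0 := by
  induction k with
  | zero => rfl
  | succ k ih =>
    rw [mul_add_one, sum_range_succ, sum_range_succ, ih, alternatingSign_two_mul,
      alternatingSign_two_mul_add_one]
    rfl

/-- The generating function of enriched words over the alphabets of even size. -/
def evenSeries {n : ℕ} (p : Fin n → ℤ) : ℚ⟦X⟧ :=
  PowerSeries.mk fun k => (enrichedCount alternatingSign (range (2 * k)) p : ℚ)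

/-- The generating function of enriched words over the alphabets of odd size. -/
def oddSeries {n : ℕ} (p : Fin n → ℤ) : ℚ⟦X⟧ :=
  PowerSeries.mk fun k => (enrichedCount alternatingSign (range (2 * k + 1)) p : ℚ)

section Step

variable {i : ℕ} {p : Fin (i + 2) → ℤ}

theorem oddSeries_of_ascent (h : p (Fin.last i).castSucc < p (Fin.last (i + 1))) :
    oddSeries p = evenSeries p + evenSeries (Fin.init p) := by
  ext k
  simp only [oddSeries, evenSeries, map_add, coeff_mk]
  rw [enrichedCount_range_succ, alternatingSign_two_mul, if_neg (by simpa using h.le), Nat.cast_add]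

theorem evenSeries_of_ascent (h : p (Fin.last i).castSucc < p (Fin.last (i + 1))) :
    evenSeries p = X * oddSeries p + evenSeries (Fin.init p) := by
  ext k
  cases k with
  | zero => simp [evenSeries, enrichedCount_empty]
  | succ k =>
    simp only [oddSeries, evenSeries, map_add, coeff_succ_X_mul, coeff_mk]
    rw [mul_add_one, enrichedCount_range_succ, alternatingSign_two_mul_add_one,
      if_pos (by simpa using h), Nat.cast_add]

theorem oddSeries_of_descent (h : p (Fin.last (i + 1)) < p (Fin.last i).castSucc) :
    oddSeries p = evenSeries p + oddSeries (Fin.init p) := by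
  ext k
  simp only [oddSeries, evenSeries, map_add, coeff_mk]
  rw [enrichedCount_range_succ, alternatingSign_two_mul, if_pos (by simpa using h), Nat.cast_add]

theorem evenSeries_of_descent (h : p (Fin.last (i + 1)) < p (Fin.last i).castSucc) :
    evenSeries p = X * (oddSeries p + oddSeries (Fin.init p)) := by
  ext k
  cases k with
  | zero => simp [evenSeries, enrichedCount_empty]
  | succ k =>
    simp only [oddSeries, evenSeries, map_add, coeff_succ_X_mul, coeff_mk]
    rw [mul_add_one, enrichedCount_range_succ, alternatingSign_two_mul_add_one,
      if_neg (by simpa using h.le), Nat.cast_add]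

theorem one_add_X_mul_oddSeries_of_ascent (h : p (Fin.last i).castSucc < p (Fin.last (i + 1))) :
    (1 + X) * oddSeries p = 2 * evenSeries p := by
  linear_combination oddSeries_of_ascent h - evenSeries_of_ascent h

theorem one_sub_X_mul_evenSeries_of_ascent (h : p (Fin.last i).castSucc < p (Fin.last (i + 1))) :
    (1 - X) * evenSeries p = (1 + X) * evenSeries (Fin.init p) := by
  linear_combination X * oddSeries_of_ascent h + evenSeries_of_ascent h

theorem one_add_X_mul_evenSeries_of_descent
    (h : p (Fin.last (i + 1)) < p (Fin.last i).castSucc) :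
    (1 + X) * evenSeries p = 2 * X * oddSeries p := by
  linear_combination evenSeries_of_descent h - X * oddSeries_of_descent h

theorem one_sub_X_mul_evenSeries_of_descent
    (h : p (Fin.last (i + 1)) < p (Fin.last i).castSucc) :
    (1 - X) * evenSeries p = 2 * X * oddSeries (Fin.init p) := by
  linear_combination evenSeries_of_descent h + X * oddSeries_of_descent h

end Step

section OneLetter

variable (p : Fin 1 → ℤ)

theorem oddSeries_one : oddSeries p = evenSeries p + PowerSeries.mk 1 := by
  ext k
  simp [oddSeries, evenSeries, enrichedCount_one]

theorem evenSeries_one : evenSeries p = X * (oddSeries p + PowerSeries.mk 1) := by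
  ext k
  cases k with
  | zero => simp [evenSeries, enrichedCount_one]
  | succ k =>
    simp only [oddSeries, evenSeries, enrichedCount_one, coeff_succ_X_mul, map_add, coeff_mk,
      card_range, Pi.one_apply]
    push_cast
    ring

theorem one_sub_X_sq_mul_evenSeries_one : (1 - X) ^ 2 * evenSeries p = 2 * X := by
  have h : PowerSeries.mk 1 * (1 - X : ℚ⟦X⟧) = 1 := mk_one_mul_one_sub_eq_one ℚ
  linear_combination (1 - X) * (evenSeries_one p + X * oddSeries_one p) + 2 * X * h

theorem one_add_X_mul_evenSeries_one : (1 + X) * evenSeries p = 2 * X * oddSeries p := by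
  linear_combination evenSeries_one p - X * oddSeries_one p

end OneLetter

end AlternatingSeries

section Weights

open PowerSeries

/-- The factor contributed by every letter to the generating function of enriched words. -/
def letterWeight : ℚ⟦X⟧ := (1 + X) * (1 - X)⁻¹

/-- The factor contributed by every peak to the generating function of enriched words. -/
def peakWeight : ℚ⟦X⟧ := 4 * X * ((1 + X)⁻¹) ^ 2

theorem one_sub_X_mul_letterWeight : (1 - X) * letterWeight = 1 + X := by
  rw [letterWeight, mul_left_comm, PowerSeries.mul_inv_cancel _ (by simp), mul_one]

theorem one_add_X_sq_mul_peakWeight : (1 + X) ^ 2 * peakWeight = 4 * X := by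
  rw [peakWeight, mul_left_comm, ← mul_pow, PowerSeries.mul_inv_cancel _ (by simp), one_pow,
    mul_one]

theorem one_sub_X_ne_zero : (1 - X : ℚ⟦X⟧) ≠ 0 := fun h => by
  simpa using congrArg constantCoeff h

theorem one_add_X_ne_zero : (1 + X : ℚ⟦X⟧) ≠ 0 := fun h => by
  simpa using congrArg constantCoeff h

theorem letterWeight_ne_zero : letterWeight ≠ 0 := fun h => one_add_X_ne_zero <| by
  rw [← one_sub_X_mul_letterWeight, h, mul_zero]

theorem letterWeight_sq_mul_one_sub_peakWeight : letterWeight ^ 2 * (1 - peakWeight) = 1 := by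
  refine mul_left_cancel₀ (pow_ne_zero 2 (mul_ne_zero one_sub_X_ne_zero one_add_X_ne_zero)) ?_
  linear_combination ((1 - X) * letterWeight + (1 + X)) * ((1 + X) ^ 2 * (1 - peakWeight)) *
    one_sub_X_mul_letterWeight - (1 + X) ^ 2 * one_add_X_sq_mul_peakWeight

theorem aeval_injective_of_constantCoeff_eq_zero {K : Type*} [Field K] {U : K⟦X⟧} (hU : U ≠ 0)
    (hU0 : constantCoeff U = 0) : Injective (Polynomial.aeval (R := K) U) := by
  have hconst (q : Polynomial K) : constantCoeff (Polynomial.aeval U q) = q.eval 0 := by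
    conv_lhs => rw [← Polynomial.divX_mul_X_add q]
    simp [hU0, Polynomial.coeff_zero_eq_eval_zero]
  refine (injective_iff_map_eq_zero _).mpr fun P hP => not_not.mp fun hne => ?_
  obtain ⟨q, hPq, hq⟩ := Polynomial.exists_eq_pow_rootMultiplicity_mul_and_not_dvd P hne 0
  rw [hPq, map_mul, map_pow, map_sub, Polynomial.aeval_X, Polynomial.aeval_C, map_zero,
    sub_zero] at hP
  have hq0 := (mul_eq_zero.mp hP).resolve_left (pow_ne_zero _ hU)
  rw [Polynomial.dvd_iff_isRoot, Polynomial.IsRoot, ← hconst, hq0, map_zero] at hq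
  exact hq rfl

theorem aeval_peakWeight_injective : Injective (Polynomial.aeval (R := ℚ) peakWeight) := by
  refine aeval_injective_of_constantCoeff_eq_zero (fun h => ?_) (by simp [peakWeight])
  have h4 := one_add_X_sq_mul_peakWeight
  rw [h, mul_zero, eq_comm, mul_eq_zero] at h4
  refine h4.elim (fun h => ?_) X_ne_zero
  have h0 := congrArg constantCoeff h
  rw [map_ofNat, map_zero] at h0
  exact four_ne_zero h0

end Weights

section PeakCount

open PowerSeries

/-- The number of peaks among the first `i + 1` entries `p 0, …, p i` of a sequence. -/
def peakCount (p : ℕ → ℤ) (i : ℕ) : ℕ :=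
  #{j ∈ range i | 0 < j ∧ p (j - 1) < p j ∧ p (j + 1) < p j}

theorem peakCount_succ (p : ℕ → ℤ) (i : ℕ) : peakCount p (i + 1) =
    peakCount p i + if 0 < i ∧ p (i - 1) < p i ∧ p (i + 1) < p i then 1 else 0 := by
  rw [peakCount, range_add_one, filter_insert]
  split_ifs
  · rw [card_insert_of_notMem (by simp), peakCount]
  · rfl

theorem evenSeries_succ {p : ℕ → ℤ} {i : ℕ} (hp : ∀ j ≤ i, p j ≠ p (j + 1)) :
    evenSeries (fun j : Fin (i + 2) => p j) = letterWeight *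
      (if 0 < i ∧ p (i - 1) < p i ∧ p (i + 1) < p i then peakWeight else 1) *
        evenSeries fun j : Fin (i + 1) => p j := by
  set E := evenSeries fun j : Fin (i + 1) => p j with hE
  set O := oddSeries fun j : Fin (i + 1) => p j with hO
  have hL := one_sub_X_mul_letterWeight
  have hP := one_add_X_sq_mul_peakWeight
  refine mul_left_cancel₀ (mul_ne_zero one_sub_X_ne_zero (pow_ne_zero 2 one_add_X_ne_zero)) ?_
  rcases (hp i le_rfl).lt_or_gt with h | h
  · have hstep : (1 - X) * evenSeries (fun j : Fin (i + 2) => p j) = (1 + X) * E :=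
      one_sub_X_mul_evenSeries_of_ascent (p := fun j : Fin (i + 2) => p j) h
    rw [if_neg fun hpeak => h.not_gt hpeak.2.2]
    linear_combination (1 + X) ^ 2 * hstep - (1 + X) ^ 2 * E * hL
  · have hstep : (1 - X) * evenSeries (fun j : Fin (i + 2) => p j) = 2 * X * O :=
      one_sub_X_mul_evenSeries_of_descent (p := fun j : Fin (i + 2) => p j) h
    split_ifs with hpeak
    · obtain ⟨i, rfl⟩ := Nat.exists_eq_succ_of_ne_zero hpeak.1.ne'
      have hlast : (1 + X) * O = 2 * E :=
        one_add_X_mul_oddSeries_of_ascent (p := fun j : Fin (i + 2) => p j) hpeak.2.1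
      linear_combination (1 + X) ^ 2 * hstep + 2 * X * (1 + X) * hlast -
        (1 + X) ^ 2 * peakWeight * E * hL - (1 + X) * E * hP
    · have hlast : (1 + X) * E = 2 * X * O := by
        cases i with
        | zero => exact one_add_X_mul_evenSeries_one _
        | succ i =>
          refine one_add_X_mul_evenSeries_of_descent (p := fun j : Fin (i + 2) => p j)
            ((hp i i.le_succ).lt_or_gt.resolve_left fun h' => hpeak ⟨i.succ_pos, h', h⟩)
      linear_combination (1 + X) ^ 2 * hstep - (1 + X) ^ 2 * hlast - (1 + X) ^ 2 * E * hL

theorem two_mul_evenSeries {p : ℕ → ℤ} {i : ℕ} (hp : ∀ j < i, p j ≠ p (j + 1)) :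
    2 * evenSeries (fun j : Fin (i + 1) => p j) =
      letterWeight ^ (i + 2) * peakWeight ^ (peakCount p i + 1) := by
  induction i with
  | zero =>
    refine mul_left_cancel₀ (pow_ne_zero 2 (mul_ne_zero one_sub_X_ne_zero one_add_X_ne_zero)) ?_
    rw [show peakCount p 0 = 0 from rfl]
    linear_combination 2 * (1 + X) ^ 2 * one_sub_X_sq_mul_evenSeries_one (fun j : Fin 1 => p j) -
      (1 + X) ^ 2 * peakWeight * ((1 - X) * letterWeight + (1 + X)) * one_sub_X_mul_letterWeight -
      (1 + X) ^ 2 * one_add_X_sq_mul_peakWeight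
  | succ i ih =>
    rw [evenSeries_succ fun j hj => hp j (Nat.lt_succ_of_le hj), mul_left_comm,
      ih fun j hj => hp j (hj.trans i.lt_succ_self), peakCount_succ]
    split_ifs <;> ring

/-- The one-line notation of `π` continued to a sequence of integers numbered from `0`. -/
def extendedValue {n : ℕ} (π : Perm (Fin n)) (j : ℕ) : ℤ := oneLine n π (j + 1) - 1

theorem extendedValue_val {n : ℕ} (π : Perm (Fin n)) (j : Fin n) :
    extendedValue π j = permValue π j := by
  simp [extendedValue, permValue, oneLine, Nat.succ_le_of_lt j.2]

theorem peakCount_extendedValue {n : ℕ} (π : Perm (Fin n)) :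
    peakCount (extendedValue π) (n - 1) = pk n π := by
  refine card_nbij' (· + 1) (· - 1) (fun j hj => ?_) (fun j hj => ?_)
    (fun j _ => j.add_sub_cancel 1) fun j hj => ?_
  · simp only [coe_filter, Set.mem_ofPred_eq, mem_range, mem_Icc, extendedValue,
      sub_lt_sub_iff_right, Nat.cast_lt, Nat.add_sub_cancel] at hj ⊢
    rw [Nat.sub_add_cancel hj.2.1] at hj
    exact ⟨⟨by omega, by omega⟩, hj.2.2⟩
  · simp only [coe_filter, Set.mem_ofPred_eq, mem_range, mem_Icc, extendedValue,
      sub_lt_sub_iff_right, Nat.cast_lt] at hj ⊢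
    rw [Nat.sub_add_cancel (by omega : 1 ≤ j), Nat.sub_add_cancel (by omega : 1 ≤ j - 1)]
    exact ⟨by omega, by omega, hj.2⟩
  · exact Nat.sub_add_cancel (one_le_two.trans (mem_Icc.mp (mem_filter.mp hj).1).1)

theorem two_mul_evenSeries_permValue {n : ℕ} (hn : 0 < n) (π : Perm (Fin n)) :
    2 * evenSeries (permValue π) = letterWeight ^ (n + 1) * peakWeight ^ (pk n π + 1) := by
  obtain ⟨i, rfl⟩ := Nat.exists_eq_succ_of_ne_zero hn.ne'
  rw [← peakCount_extendedValue, ← funext (extendedValue_val π)]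
  refine two_mul_evenSeries fun j hj h => ?_
  have h' := (extendedValue_val π ⟨j, by omega⟩).symm.trans
    (h.trans (extendedValue_val π ⟨j + 1, by omega⟩))
  exact absurd (Fin.mk.inj_iff.mp (permValue_injective π h')) j.lt_succ_self.ne

end PeakCount

section CyclicSum

open PowerSeries

theorem two_mul_mk_sum_enrichedCount {n : ℕ} (hn : 0 < n) (s : Finset (Perm (Fin n))) :
    2 * PowerSeries.mk (fun k =>
        ∑ π ∈ s, (enrichedCount alternatingSign (range (2 * k)) (permValue π) : ℚ)) =
      letterWeight ^ (n + 1) *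
        Polynomial.aeval peakWeight (∑ π ∈ s, (Polynomial.X : Polynomial ℚ) ^ (pk n π + 1)) := by
  have hsum : PowerSeries.mk (fun k =>
        ∑ π ∈ s, (enrichedCount alternatingSign (range (2 * k)) (permValue π) : ℚ)) =
      ∑ π ∈ s, evenSeries (permValue π) := by
    ext k
    simp only [evenSeries, map_sum, coeff_mk]
  rw [hsum, mul_sum, map_sum, mul_sum]
  refine sum_congr rfl fun π _ => ?_
  rw [two_mul_evenSeries_permValue hn, map_pow, Polynomial.aeval_X]

theorem two_mul_mk_pow {n : ℕ} (hn : 0 < n) :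
    2 * PowerSeries.mk (fun k => (2 * k : ℚ) ^ n) =
      letterWeight ^ (n + 1) * Polynomial.aeval peakWeight (peakP n) := by
  rw [peakP, ← two_mul_mk_sum_enrichedCount hn univ]
  congr 2
  ext k
  rw [← Nat.cast_sum, sum_enrichedCount, card_range]
  push_cast
  rfl

theorem two_mul_mk_pow_div {n d : ℕ} (hn : 0 < n) (hdn : d ∣ n) (hd : Odd d) :
    2 * PowerSeries.mk (fun k => (2 * k : ℚ) ^ (n / d)) =
      letterWeight ^ (n + 1) * Polynomial.aeval peakWeight
        ((1 - Polynomial.X) ^ ((n - n / d) / 2) * peakP (n / d)) := by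
  have hexp : n + 1 = n / d + 1 + 2 * ((n - n / d) / 2) := by
    obtain ⟨m, rfl⟩ := hdn
    rw [Nat.mul_div_cancel_left m hd.pos]
    obtain ⟨k, rfl⟩ := hd
    rw [add_one_mul, Nat.add_sub_cancel, mul_assoc, Nat.mul_div_cancel_left _ two_pos]
    ring
  rw [two_mul_mk_pow (Nat.div_pos (Nat.le_of_dvd hn hdn) hd.pos), map_mul, map_pow, map_sub,
    map_one, Polynomial.aeval_X, hexp, pow_add _ (n / d + 1), pow_mul, mul_assoc,
    ← mul_assoc ((letterWeight ^ 2) ^ _), ← mul_pow, letterWeight_sq_mul_one_sub_peakWeight,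
    one_pow, one_mul]

theorem natCast_mul_mk_sum_cyclicSet {n : ℕ} (hn : 0 < n) :
    (n : ℚ⟦X⟧) * PowerSeries.mk (fun k => ∑ π ∈ cyclicSet n,
        (enrichedCount alternatingSign (range (2 * k)) (permValue π) : ℚ)) =
      ∑ d ∈ n.divisors with Odd d, ((ArithmeticFunction.moebius d : ℤ) : ℚ⟦X⟧) *
        PowerSeries.mk fun k => (2 * k : ℚ) ^ (n / d) := by
  ext k
  have h := congrArg (Int.cast : ℤ → ℚ)
    (mul_sum_enrichedCount_cyclicSet (sum_range_alternatingSign k) hn)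
  rw [card_range] at h
  push_cast at h
  simpa only [← nsmul_eq_mul, ← zsmul_eq_mul, map_sum, map_nsmul, map_zsmul, coeff_mk] using h

end CyclicSum

end PeakEnumeration

theorem stmt5 (n : ℕ) (hn : 1 ≤ n) :
    (n : Polynomial ℚ) * ∑ π ∈ cyclicSet n, Polynomial.X ^ (pk n π + 1)
      = ∑ d ∈ n.divisors.filter (fun d => Odd d),
          ((ArithmeticFunction.moebius d : ℤ) : Polynomial ℚ)
            * (1 - Polynomial.X) ^ ((n - n / d) / 2) * peakP (n / d) := by
  refine PeakEnumeration.aeval_peakWeight_injective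
    (mul_left_cancel₀ (pow_ne_zero (n + 1) PeakEnumeration.letterWeight_ne_zero) ?_)
  rw [map_mul, map_natCast, mul_left_comm, ← PeakEnumeration.two_mul_mk_sum_enrichedCount hn,
    mul_left_comm, PeakEnumeration.natCast_mul_mk_sum_cyclicSet hn, Finset.mul_sum, map_sum,
    Finset.mul_sum]
  refine Finset.sum_congr rfl fun d hd => ?_
  obtain ⟨hdn, hodd⟩ := Finset.mem_filter.mp hd
  rw [mul_left_comm, PeakEnumeration.two_mul_mk_pow_div hn (Nat.dvd_of_mem_divisors hdn) hodd,
    mul_assoc, map_mul (Polynomial.aeval PeakEnumeration.peakWeight) (Int.cast _), map_intCast,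
    mul_left_comm]

end
end

section
/- Let n ≥ 2 and let (B_m(t))_{m ≥ 0} be the family of polynomials in ℚ[t] determined by the formal power series identities B_m(t) = (1−t)^{m+1} · Σ_{k ≥ 0} (2k+1)^m t^k for every m ≥ 0. If n is a power of 2, then n · Σ_{π ∈ 𝔠_n} 4^{lpk(π)} t^{lpk(π)} (1+t)^{n−2·lpk(π)} = B_n(t) − (1−t)^n; otherwise, n · Σ_{π ∈ 𝔠_n} 4^{lpk(π)} t^{lpk(π)} (1+t)^{n−2·lpk(π)} = Σ_{d ∣ n, d odd} μ(d) (1−t)^{n−n/d} B_{n/d}(t). (These are the formulas n(1+t)^n C_n^{lpk}(4t/(1+t)²) = B_n(t) − (1−t)^n and n(1+t)^n C_n^{lpk}(4t/(1+t)²) = Σ_{d ∣ n, d odd} μ(d)(1−t)^{n−n/d} B_{n/d}(t), where C_n^{lpk}(t) = Σ_{π ∈ 𝔠_n} t^{lpk(π)}, with denominators cleared; note 2·lpk(π) ≤ n for every π ∈ S_n.) -/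
open scoped Classical

noncomputable section

/-!
For a permutation `π` of `[n]`, the quotient of `4 ^ lpk π * t ^ lpk π * (1 + t) ^ (n - 2 * lpk π)`
by `(1 - t) ^ (n + 1)` is the generating function, in `k`, of the left enriched `P`-partitions of
`π` with letters in `{-k, …, k}`. A cyclic permutation is the conjugate of the rotation of `ZMod n`
by exactly `n` labelings `ZMod n ≃ Fin n`, so that `n` times the sum over cyclic permutations counts
pairs of a labeling of the cycle and a word around the cycle which are compatible.

Fix the word. Two positions with the same letter compare like their successors if the letter is
nonnegative, and oppositely if it is negative. Hence the labels of two positions are ordered like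
the words read off from there, compared lexicographically with a reversal after each negative
letter, and there is a choice only if the word is periodic. It follows that a primitive word has
exactly one compatible labeling, the square of a primitive word with an odd number of negative
letters has exactly two, and any other word has none. Writing `n = 2 ^ j * m` with `m` odd, the
total over all cycle lengths `2 ^ j * e` with `e ∣ m` is the number `(2 * k + 1) ^ n` of all words,
corrected for `j ≠ 0` by the signed count of the words of length `n / 2`, which is `1`. Möbius
inversion over the odd number `m` isolates the words around the cycle of length `n`.
-/

open Finset

/-! ### Left enriched `P`-partitions -/

/-- The condition relating two entries of a left enriched `P`-partition, at an inversion of the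
underlying permutation if `desc` holds and at a non-inversion otherwise. The letters
`0 < -1 < 1 < -2 < 2 < ⋯` are encoded as `2 * a` for `a` and `2 * a - 1` for `-a`, so a repeated
letter has to be even (nonnegative) at a non-inversion and odd (negative) at an inversion. -/
def EnrichedStep (desc : Prop) (a b : ℕ) : Prop := a < b ∨ a = b ∧ (Even a ↔ ¬ desc)

lemma EnrichedStep.le {desc : Prop} {a b : ℕ} (h : EnrichedStep desc a b) : a ≤ b := by
  rcases h with h | ⟨h, -⟩ <;> omega

lemma EnrichedStep.trans {α : Type*} [LinearOrder α] {x y z : α} {a b c : ℕ}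
    (hab : EnrichedStep (y < x) a b) (hbc : EnrichedStep (z < y) b c) :
    EnrichedStep (z < x) a c := by
  rcases hab with hab | ⟨rfl, hab⟩
  · exact Or.inl (hab.trans_le hbc.le)
  rcases hbc with hbc | ⟨rfl, hbc⟩
  · exact Or.inl hbc
  refine Or.inr ⟨rfl, ?_⟩
  by_cases ha : Even a
  · simp only [ha, true_iff, not_lt] at hab hbc ⊢
    exact hab.trans hbc
  · simp only [ha, false_iff, not_not] at hab hbc ⊢
    exact hbc.trans hab

/-- `f` is a left enriched `P`-partition for the arrangement `g`, in the encoding of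
`EnrichedStep`. -/
def IsEnriched {ι α : Type*} [LT ι] [LT α] (g : ι → α) (f : ι → ℕ) : Prop :=
  ∀ i j, i < j → EnrichedStep (g j < g i) (f i) (f j)

lemma isEnriched_iff_forall_succ {α : Type*} [LinearOrder α] {m : ℕ} {g : Fin (m + 1) → α}
    {f : Fin (m + 1) → ℕ} :
    IsEnriched g f ↔
      ∀ i : Fin m, EnrichedStep (g i.succ < g i.castSucc) (f i.castSucc) (f i.succ) := by
  let r : α × ℕ → α × ℕ → Prop := fun p q => EnrichedStep (q.1 < p.1) p.2 q.2
  have : IsTrans (α × ℕ) r := ⟨fun _ _ _ => EnrichedStep.trans⟩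
  exact ⟨fun h i => h _ _ i.castSucc_lt_succ,
    fun h i j hij => (Fin.liftFun_iff_succ r (f := fun i => (g i, f i))).2 h hij⟩

/-- The number of enriched chains of `i + 1` letters, with descents at the positions satisfying `s`,
whose last letter is `q`. -/
def chainCount (s : ℕ → Prop) : ℕ → ℕ → ℕ
  | 0, _ => 1
  | i + 1, q =>
    ∑ a ∈ range q, chainCount s i a + if Even q ↔ ¬ s (i + 1) then chainCount s i q else 0

lemma sum_fin_enrichedStep {M : Type*} [AddCommMonoid M] (F : ℕ → M) {K : ℕ} (desc : Prop)
    (q : Fin K) :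
    ∑ a : Fin K, (if EnrichedStep desc a q then F a else 0) =
      ∑ a ∈ range q, F a + if Even (q : ℕ) ↔ ¬ desc then F q else 0 := by
  have hsub : range (q + 1) ⊆ range K := range_subset_range.2 q.isLt
  rw [Fin.sum_univ_eq_sum_range (fun a => if EnrichedStep desc a q then F a else 0) K,
    ← sum_subset hsub, sum_range_succ]
  · congr 1
    · exact sum_congr rfl fun a ha => if_pos (Or.inl (mem_range.1 ha))
    · simp [EnrichedStep]
  · intro a _ ha
    rw [mem_range] at ha
    exact if_neg fun h => ha (Nat.lt_succ_of_le h.le)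

/-- Left enriched `P`-partitions with the permutation replaced by its set `s` of descents, numbered
from `1`; only consecutive entries are compared. -/
def IsEnrichedChain (s : ℕ → Prop) {i : ℕ} (f : Fin (i + 1) → ℕ) : Prop :=
  ∀ j : Fin i, EnrichedStep (s (j + 1)) (f j.castSucc) (f j.succ)

lemma isEnrichedChain_snoc {s : ℕ → Prop} {i K : ℕ} (f : Fin (i + 1) → Fin K) (b : Fin K) :
    IsEnrichedChain s (fun j => ((Fin.snoc f b : Fin (i + 2) → Fin K) j : ℕ)) ↔
      IsEnrichedChain s (fun j => (f j : ℕ)) ∧ EnrichedStep (s (i + 1)) (f (Fin.last i)) b := by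
  simp only [IsEnrichedChain, Fin.forall_fin_succ' (n := i), Fin.succ_castSucc, Fin.snoc_castSucc,
    Fin.succ_last, Fin.snoc_last, Fin.val_castSucc, Fin.val_last]

lemma sum_isEnrichedChain (s : ℕ → Prop) (K i : ℕ) (F : Fin K → ℕ) :
    ∑ f : Fin (i + 1) → Fin K,
        (if IsEnrichedChain s (fun j => (f j : ℕ)) then F (f (Fin.last i)) else 0) =
      ∑ q : Fin K, F q * chainCount s i q := by
  induction i generalizing F with
  | zero =>
    rw [← (Equiv.funUnique (Fin 1) (Fin K)).symm.sum_comp]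
    simp [IsEnrichedChain, chainCount]
  | succ i ih =>
    calc _ = ∑ f : Fin (i + 1) → Fin K, if IsEnrichedChain s (fun j => (f j : ℕ)) then
          ∑ b : Fin K, (if EnrichedStep (s (i + 1)) (f (Fin.last i)) b then F b else 0)
          else 0 := by
          rw [← (Fin.snocEquiv fun _ => Fin K).sum_comp, Fintype.sum_prod_type, sum_comm]
          refine sum_congr rfl fun f _ => ?_
          simp only [Fin.snocEquiv, Equiv.coe_fn_mk, isEnrichedChain_snoc, Fin.snoc_last, ite_and]
          split_ifs <;> simp
      _ = ∑ b : Fin K, F b *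
          ∑ a : Fin K, (if EnrichedStep (s (i + 1)) a b then chainCount s i a else 0) := by
          rw [ih fun a => ∑ b : Fin K, if EnrichedStep (s (i + 1)) a b then F b else 0]
          simp only [sum_mul, mul_sum, ite_mul, mul_ite, zero_mul, mul_zero]
          exact sum_comm
      _ = _ := by simp only [sum_fin_enrichedStep (chainCount s i), chainCount]

lemma card_isEnrichedChain (s : ℕ → Prop) (K i : ℕ) :
    #{f : Fin (i + 1) → Fin K | IsEnrichedChain s (fun j => (f j : ℕ))} =
      ∑ q ∈ range K, chainCount s i q := by
  rw [card_filter, sum_isEnrichedChain s K i fun _ => 1, ← Fin.sum_univ_eq_sum_range]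
  simp only [one_mul]

/-! ### Generating functions of enriched chains -/

section GeneratingFunction

open PowerSeries

lemma one_sub_X_mul_mk {R : Type*} [CommRing R] (a : ℕ → R) :
    (1 - X) * PowerSeries.mk (fun k => ∑ q ∈ range (k + 1), a q) = PowerSeries.mk a := by
  ext k
  rw [sub_mul, one_mul, map_sub, coeff_mk, coeff_mk]
  cases k with
  | zero => simp
  | succ k => rw [coeff_succ_X_mul, coeff_mk, sum_range_succ, add_sub_cancel_left]

lemma sum_range_two_mul {M : Type*} [AddCommMonoid M] (a : ℕ → M) (k : ℕ) :
    ∑ q ∈ range (2 * k), a q = ∑ q ∈ range k, (a (2 * q) + a (2 * q + 1)) := by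
  induction k with
  | zero => rfl
  | succ k ih => rw [mul_add_one, sum_range_succ, sum_range_succ, ih, sum_range_succ, add_assoc]

/-- The generating function of the even-indexed terms of `a`. -/
def evenSeries {R : Type*} [Semiring R] (a : ℕ → R) : R⟦X⟧ := PowerSeries.mk fun k => a (2 * k)

/-- The generating function of the odd-indexed terms of `a`. -/
def oddSeries {R : Type*} [Semiring R] (a : ℕ → R) : R⟦X⟧ := PowerSeries.mk fun k => a (2 * k + 1)

section PartialSums

variable {R : Type*} [CommRing R] (a : ℕ → R)

lemma one_sub_X_mul_evenSeries_sum :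
    (1 - X) * evenSeries (fun n => ∑ q ∈ range n, a q) = X * (evenSeries a + oddSeries a) := by
  have h : evenSeries (fun n => ∑ q ∈ range n, a q) =
      X * PowerSeries.mk fun k => ∑ q ∈ range (k + 1), (a (2 * q) + a (2 * q + 1)) := by
    ext k
    cases k with
    | zero => simp [evenSeries]
    | succ k => rw [coeff_succ_X_mul, evenSeries, coeff_mk, coeff_mk, sum_range_two_mul]
  rw [h, mul_left_comm, one_sub_X_mul_mk]
  rfl

lemma one_sub_X_mul_oddSeries_sum :
    (1 - X) * oddSeries (fun n => ∑ q ∈ range n, a q) = evenSeries a + X * oddSeries a := by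
  have h : oddSeries (fun n => ∑ q ∈ range n, a q) =
      evenSeries (fun n => ∑ q ∈ range n, a q) + evenSeries a := by
    ext k
    simp only [oddSeries, evenSeries, map_add, coeff_mk, sum_range_succ]
  rw [h, mul_add, one_sub_X_mul_evenSeries_sum]
  ring

end PartialSums

/-- The numbers `chainCount s i` as a rational sequence indexed by the last letter. -/
def chainSeq (s : ℕ → Prop) (i : ℕ) : ℕ → ℚ := fun q => chainCount s i q

/-- The generating function of enriched chains by their last letter, in which the letters `2 * a`
and `2 * a - 1`, encoding `a` and `-a`, both contribute to `X ^ a`. -/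
def chainSeries (s : ℕ → Prop) (i : ℕ) : ℚ⟦X⟧ :=
  evenSeries (chainSeq s i) + X * oddSeries (chainSeq s i)

lemma one_sub_X_mul_mk_sum_chainCount (s : ℕ → Prop) (i : ℕ) :
    (1 - X) * PowerSeries.mk (fun k => ((∑ q ∈ range (2 * k + 1), chainCount s i q : ℕ) : ℚ)) =
      chainSeries s i := by
  rw [chainSeries, ← one_sub_X_mul_oddSeries_sum]
  simp only [oddSeries, chainSeq, Nat.cast_sum]

lemma one_sub_X_mul_chainSeries_zero (s : ℕ → Prop) : (1 - X) * chainSeries s 0 = 1 + X := by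
  have h : (1 - X) * PowerSeries.mk (fun _ => (1 : ℚ)) = 1 := by
    rw [mul_comm]
    exact mk_one_mul_one_sub_eq_one ℚ
  simp only [chainSeries, chainSeq, evenSeries, oddSeries, chainCount, Nat.cast_one]
  linear_combination (1 + X) * h

section Recurrence

variable {s : ℕ → Prop} {i : ℕ}

lemma evenSeries_chainSeq_of_not (h : ¬ s (i + 1)) :
    (1 - X) * evenSeries (chainSeq s (i + 1)) = chainSeries s i := by
  have : evenSeries (chainSeq s (i + 1)) =
      evenSeries (fun n => ∑ q ∈ range n, chainSeq s i q) + evenSeries (chainSeq s i) := by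
    ext k
    simp [evenSeries, chainSeq, chainCount, h]
  rw [this, mul_add, one_sub_X_mul_evenSeries_sum, chainSeries]
  ring

lemma oddSeries_chainSeq_of_not (h : ¬ s (i + 1)) :
    (1 - X) * oddSeries (chainSeq s (i + 1)) = chainSeries s i := by
  have : oddSeries (chainSeq s (i + 1)) =
      oddSeries (fun n => ∑ q ∈ range n, chainSeq s i q) := by
    ext k
    simp [oddSeries, chainSeq, chainCount, h]
  rw [this, one_sub_X_mul_oddSeries_sum, chainSeries]

lemma evenSeries_chainSeq_of (h : s (i + 1)) :
    (1 - X) * evenSeries (chainSeq s (i + 1)) =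
      X * (evenSeries (chainSeq s i) + oddSeries (chainSeq s i)) := by
  have : evenSeries (chainSeq s (i + 1)) =
      evenSeries (fun n => ∑ q ∈ range n, chainSeq s i q) := by
    ext k
    simp [evenSeries, chainSeq, chainCount, h]
  rw [this, one_sub_X_mul_evenSeries_sum]

lemma oddSeries_chainSeq_of (h : s (i + 1)) :
    (1 - X) * oddSeries (chainSeq s (i + 1)) =
      evenSeries (chainSeq s i) + oddSeries (chainSeq s i) := by
  have : oddSeries (chainSeq s (i + 1)) =
      oddSeries (fun n => ∑ q ∈ range n, chainSeq s i q) + oddSeries (chainSeq s i) := by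
    ext k
    simp [oddSeries, chainSeq, chainCount, h]
  rw [this, mul_add, one_sub_X_mul_oddSeries_sum]
  ring

lemma one_sub_X_ne_zero : (1 - X : ℚ⟦X⟧) ≠ 0 := fun h => by
  simpa using congrArg constantCoeff h

lemma one_sub_X_mul_chainSeries_of_not (h : ¬ s (i + 1)) :
    (1 - X) * chainSeries s (i + 1) = (1 + X) * chainSeries s i := by
  rw [chainSeries]
  linear_combination evenSeries_chainSeq_of_not h + X * oddSeries_chainSeq_of_not h

lemma one_sub_X_mul_chainSeries_of (h : s (i + 1)) :
    (1 - X) * chainSeries s (i + 1) =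
      2 * X * (evenSeries (chainSeq s i) + oddSeries (chainSeq s i)) := by
  rw [chainSeries]
  linear_combination evenSeries_chainSeq_of h + X * oddSeries_chainSeq_of h

lemma evenSeries_chainSeq_eq_oddSeries (h : ¬ s i) :
    evenSeries (chainSeq s i) = oddSeries (chainSeq s i) := by
  cases i with
  | zero => rfl
  | succ i =>
    exact mul_left_cancel₀ one_sub_X_ne_zero
      ((evenSeries_chainSeq_of_not h).trans (oddSeries_chainSeq_of_not h).symm)

lemma evenSeries_chainSeq_eq_X_mul_oddSeries (h0 : ¬ s 0) (h : s i) :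
    evenSeries (chainSeq s i) = X * oddSeries (chainSeq s i) := by
  cases i with
  | zero => exact absurd h h0
  | succ i =>
    refine mul_left_cancel₀ one_sub_X_ne_zero ?_
    rw [evenSeries_chainSeq_of h, mul_left_comm, oddSeries_chainSeq_of h]

lemma one_sub_X_mul_chainSeries_of_not_of (h : ¬ s i) (h' : s (i + 1)) :
    (1 + X) * ((1 - X) * chainSeries s (i + 1)) = 4 * X * chainSeries s i := by
  rw [one_sub_X_mul_chainSeries_of h', chainSeries, evenSeries_chainSeq_eq_oddSeries h]
  ring

lemma one_sub_X_mul_chainSeries_of_of (h0 : ¬ s 0) (h : s i) (h' : s (i + 1)) :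
    (1 - X) * chainSeries s (i + 1) = (1 + X) * chainSeries s i := by
  rw [one_sub_X_mul_chainSeries_of h', chainSeries, evenSeries_chainSeq_eq_X_mul_oddSeries h0 h]
  ring

end Recurrence

/-- The number of left peaks up to position `i` of a permutation with descent set `s`. -/
def peakCount (s : ℕ → Prop) (i : ℕ) : ℕ := #{j ∈ Icc 1 i | ¬ s (j - 1) ∧ s j}

lemma peakCount_succ (s : ℕ → Prop) (i : ℕ) :
    peakCount s (i + 1) = peakCount s i + if ¬ s i ∧ s (i + 1) then 1 else 0 := by
  have hnot : i + 1 ∉ Icc 1 i := by simp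
  rw [peakCount, ← insert_Icc_right_eq_Icc_add_one (by omega), filter_insert, Nat.add_sub_cancel]
  split_ifs with h
  · exact card_insert_of_notMem fun hi => hnot (mem_filter.1 hi).1
  · rfl

lemma two_mul_peakCount_le (s : ℕ → Prop) (i : ℕ) :
    2 * peakCount s i ≤ i + if s i then 1 else 0 := by
  induction i with
  | zero => simp [peakCount]
  | succ i ih =>
    rw [peakCount_succ]
    split_ifs at ih ⊢ with h <;> grind

/- The exponent of `1 + X` is kept as `2 * peakCount s i` on the left, so that no subtraction
occurs. -/
lemma one_sub_X_pow_mul_chainSeries {s : ℕ → Prop} (h0 : ¬ s 0) (i : ℕ) :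
    (1 + X) ^ (2 * peakCount s i) * ((1 - X) ^ (i + 1) * chainSeries s i) =
      (4 * X) ^ peakCount s i * (1 + X) ^ (i + 1) := by
  induction i with
  | zero => simp [peakCount, one_sub_X_mul_chainSeries_zero]
  | succ i ih =>
    rw [peakCount_succ, pow_succ (1 - X)]
    by_cases hpeak : ¬ s i ∧ s (i + 1)
    · rw [if_pos hpeak]
      linear_combination (1 + X) ^ (2 * peakCount s i + 1) * (1 - X) ^ (i + 1) *
        one_sub_X_mul_chainSeries_of_not_of hpeak.1 hpeak.2 + 4 * X * (1 + X) * ih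
    · have hstep : (1 - X) * chainSeries s (i + 1) = (1 + X) * chainSeries s i := by
        by_cases h' : s (i + 1)
        · exact one_sub_X_mul_chainSeries_of_of h0 (by tauto) h'
        · exact one_sub_X_mul_chainSeries_of_not h'
      rw [if_neg hpeak, add_zero]
      linear_combination (1 + X) ^ (2 * peakCount s i) * (1 - X) ^ (i + 1) * hstep + (1 + X) * ih

lemma four_pow_peakCount_mul {s : ℕ → Prop} (h0 : ¬ s 0) (i : ℕ) :
    4 ^ peakCount s i * X ^ peakCount s i * (1 + X) ^ (i + 1 - 2 * peakCount s i) =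
      (1 - X) ^ (i + 1) * chainSeries s i := by
  have hle : 2 * peakCount s i ≤ i + 1 := by
    have := two_mul_peakCount_le s i
    split_ifs at this <;> omega
  have hne : (1 + X : ℚ⟦X⟧) ≠ 0 := fun h => by simpa using congrArg constantCoeff h
  refine mul_left_cancel₀ (pow_ne_zero (2 * peakCount s i) hne) ?_
  rw [one_sub_X_pow_mul_chainSeries h0, ← mul_pow, mul_left_comm, pow_mul_pow_sub _ hle]

end GeneratingFunction

section LeftPeaks

variable {n : ℕ} (π : Equiv.Perm (Fin n))

/-- `π` has a descent at the position `i`, counted from `1`. Since `oneLine` is `0` outside of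
`[1, n]`, the position `0` is never a descent, as in the convention `π(0) = 0` for left peaks. -/
def IsDescentAt (i : ℕ) : Prop := oneLine n π (i + 1) < oneLine n π i

lemma oneLine_val_add_one (i : Fin n) : oneLine n π (i + 1) = π i + 1 :=
  dif_pos ⟨by omega, i.isLt⟩

lemma oneLine_zero : oneLine n π 0 = 0 := rfl

lemma not_isDescentAt_zero : ¬ IsDescentAt π 0 := Nat.not_lt_zero _

lemma oneLine_injOn : Set.InjOn (oneLine n π) (Set.Iic n) := by
  rintro (_ | i) hi (_ | j) hj h
  · rfl
  · rw [oneLine_zero, oneLine_val_add_one π ⟨j, hj⟩] at h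
    omega
  · rw [oneLine_zero, oneLine_val_add_one π ⟨i, hi⟩] at h
    omega
  · rw [oneLine_val_add_one π ⟨i, hi⟩, oneLine_val_add_one π ⟨j, hj⟩] at h
    have hij : (⟨i, hi⟩ : Fin n) = ⟨j, hj⟩ := π.injective (Fin.ext (by omega))
    rw [Fin.mk.inj hij]

lemma peakCount_isDescentAt : peakCount (IsDescentAt π) (n - 1) = lpk n π := by
  refine congrArg card (filter_congr fun i hi => and_congr_left fun _ => ?_)
  rw [mem_Icc] at hi
  have hne : oneLine n π (i - 1) ≠ oneLine n π i := fun h =>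
    absurd (oneLine_injOn π (Set.mem_Iic.2 (by omega)) (Set.mem_Iic.2 (by omega)) h) (by omega)
  rw [IsDescentAt, Nat.sub_add_cancel hi.1, not_lt, hne.le_iff_lt]

lemma isEnriched_iff_isEnrichedChain {m : ℕ} (π : Equiv.Perm (Fin (m + 1)))
    (f : Fin (m + 1) → ℕ) : IsEnriched π f ↔ IsEnrichedChain (IsDescentAt π) f := by
  rw [isEnriched_iff_forall_succ]
  refine forall_congr' fun i => ?_
  have hdesc : IsDescentAt π (i + 1) ↔ π i.succ < π i.castSucc := by
    have hcast : oneLine (m + 1) π (i + 1) = π i.castSucc + 1 := oneLine_val_add_one π i.castSucc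
    have hsucc : oneLine (m + 1) π (i + 1 + 1) = π i.succ + 1 := oneLine_val_add_one π i.succ
    rw [IsDescentAt, hcast, hsucc, add_lt_add_iff_right, Fin.val_fin_lt]
  rw [hdesc]

open PowerSeries in
theorem lpk_monomial_eq_mk_card_isEnriched (hn : n ≠ 0) :
    4 ^ lpk n π * X ^ lpk n π * (1 + X) ^ (n - 2 * lpk n π) =
      (1 - X) ^ (n + 1) * PowerSeries.mk fun k =>
        (#{f : Fin n → Fin (2 * k + 1) | IsEnriched π fun i => (f i : ℕ)} : ℚ) := by
  obtain ⟨m, rfl⟩ := Nat.exists_eq_succ_of_ne_zero hn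
  have hcard (k : ℕ) : #{f : Fin (m + 1) → Fin (2 * k + 1) | IsEnriched π fun i => (f i : ℕ)} =
      ∑ q ∈ range (2 * k + 1), chainCount (IsDescentAt π) m q := by
    rw [← card_isEnrichedChain]
    simp only [isEnriched_iff_isEnrichedChain]
  simp only [Nat.succ_eq_add_one, hcard]
  rw [pow_succ, mul_assoc ((1 - X) ^ _), one_sub_X_mul_mk_sum_chainCount,
    ← four_pow_peakCount_mul (not_isDescentAt_zero π), ← peakCount_isDescentAt, Nat.add_sub_cancel]

end LeftPeaks

/-! ### Conjugates of the rotation -/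

section Conjugation

lemma card_conj_eq {G : Type*} [Group G] {c x : G} (h : IsConj c x) :
    Nat.card {g : G // g * c * g⁻¹ = x} = Nat.card (Subgroup.centralizer {c}) := by
  obtain ⟨s, rfl⟩ := isConj_iff.1 h
  refine Nat.card_congr ((Equiv.mulLeft s⁻¹).subtypeEquiv fun g => ?_)
  rw [Equiv.coe_mulLeft, Subgroup.mem_centralizer_singleton_iff, mul_inv_eq_iff_eq_mul,
    ← mul_right_inj s⁻¹]
  simp only [mul_assoc, inv_mul_cancel_left]

lemma sum_conj {G M : Type*} [Group G] [Fintype G] [AddCommMonoid M] (c : G)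
    [DecidablePred (IsConj c)] (F : G → M) :
    ∑ g, F (g * c * g⁻¹) = Nat.card (Subgroup.centralizer {c}) • ∑ x with IsConj c x, F x := by
  rw [← sum_fiberwise_of_maps_to (t := {x | IsConj c x}) (g := fun g => g * c * g⁻¹)
    fun g _ => mem_filter.2 ⟨mem_univ _, isConj_iff.2 ⟨g, rfl⟩⟩, smul_sum]
  refine sum_congr rfl fun x hx => ?_
  rw [sum_congr rfl fun g hg => congrArg F (mem_filter.1 hg).2, sum_const,
    ← card_conj_eq (mem_filter.1 hx).2, Nat.card_eq_fintype_card, Fintype.card_subtype]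

variable {n : ℕ}

lemma isCyclicPerm_iff (hn : 2 ≤ n) {π : Equiv.Perm (Fin n)} :
    IsCyclicPerm n π ↔ π.cycleType = {n} := by
  rw [IsCyclicPerm, fullCycleType]
  constructor <;> intro h
  · have hmem : n ∈ π.cycleType + Multiset.replicate (n - #π.support) 1 := by
      rw [h]
      exact Multiset.mem_singleton_self n
    have hn' : n ∈ π.cycleType := (Multiset.mem_add.1 hmem).resolve_right fun h1 => by
      have := Multiset.eq_of_mem_replicate h1
      omega
    refine le_antisymm ?_ (Multiset.singleton_le.2 hn')
    rw [← h]
    exact Multiset.le_add_right _ _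
  · rw [h, ← Equiv.Perm.sum_cycleType, h, Multiset.sum_singleton, Nat.sub_self,
      Multiset.replicate_zero, add_zero]

/-- The rotation `i ↦ i + 1` of the cycle `ZMod n` transported along the labeling `φ`: the cyclic
permutation with cycle `(φ 0, φ 1, …, φ (n - 1))`. -/
def rotationConj (φ : ZMod n ≃ Fin n) : Equiv.Perm (Fin n) := φ.permCongr (Equiv.addRight 1)

lemma card_centralizer_of_cycleType_eq_singleton {c : Equiv.Perm (Fin n)}
    (hc : c.cycleType = {n}) : Nat.card (Subgroup.centralizer {c}) = n := by
  rw [Equiv.Perm.nat_card_centralizer, hc]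
  simp

theorem sum_rotationConj (hn : 2 ≤ n) [NeZero n] {M : Type*} [AddCommMonoid M]
    (F : Equiv.Perm (Fin n) → M) :
    ∑ φ : ZMod n ≃ Fin n, F (rotationConj φ) = n • ∑ π ∈ cyclicSet n, F π := by
  obtain ⟨m, rfl⟩ : ∃ m, n = m + 2 := ⟨n - 2, by omega⟩
  have hcycle : (finRotate (m + 2)).cycleType = {m + 2} := cycleType_finRotate
  have hset : cyclicSet (m + 2) = univ.filter (IsConj (finRotate (m + 2))) := by
    refine filter_congr fun π _ => ?_
    rw [isCyclicPerm_iff hn, Equiv.Perm.isConj_iff_cycleType_eq, hcycle, eq_comm]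
  have hconj (φ : Equiv.Perm (Fin (m + 2))) :
      rotationConj (n := m + 2) φ = φ * finRotate (m + 2) * φ⁻¹ := by
    ext x
    exact congrArg (fun y => (φ y : ℕ)) (finRotate_apply (φ.symm x)).symm
  have hsum := sum_conj (finRotate (m + 2)) F
  rw [card_centralizer_of_cycleType_eq_singleton hcycle, ← hset] at hsum
  exact (sum_congr rfl fun φ _ => congrArg F (hconj φ)).trans hsum

/-- The labeling `φ` of the cycle turns the word `W` around the cycle into a left enriched
`P`-partition of `rotationConj φ`. -/
def IsCompatibleLabeling (φ : ZMod n ≃ Fin n) (W : ZMod n → ℕ) : Prop :=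
  ∀ i j, φ i < φ j → EnrichedStep (φ (j + 1) < φ (i + 1)) (W i) (W j)

lemma isEnriched_rotationConj (φ : ZMod n ≃ Fin n) (W : ZMod n → ℕ) :
    IsEnriched (rotationConj φ) (W ∘ φ.symm) ↔ IsCompatibleLabeling φ W := by
  rw [IsEnriched, IsCompatibleLabeling, ← φ.forall_congr_right]
  refine forall_congr' fun i => ?_
  rw [← φ.forall_congr_right]
  simp [rotationConj, Equiv.permCongr_apply]

lemma sum_card_isEnriched_rotationConj [NeZero n] (K : ℕ) :
    ∑ φ : ZMod n ≃ Fin n,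
        #{f : Fin n → Fin K | IsEnriched (rotationConj φ) fun i => (f i : ℕ)} =
      ∑ W : ZMod n → Fin K,
        #{φ : ZMod n ≃ Fin n | IsCompatibleLabeling φ fun i => (W i : ℕ)} := by
  simp only [card_filter]
  rw [sum_comm (s := univ (α := ZMod n → Fin K))]
  refine sum_congr rfl fun φ _ => ?_
  rw [← (φ.arrowCongr (Equiv.refl (Fin K))).sum_comp]
  simp only [← isEnriched_rotationConj]
  rfl

end Conjugation

/-! ### Signed lexicographic order -/

section SignedSequences

open Function

/-- The shift of a sequence, which forgets its first term. -/
def shiftSeq {α : Type*} (u : ℕ → α) : ℕ → α := fun l => u (l + 1)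

lemma iterate_shiftSeq {α : Type*} (k : ℕ) (u : ℕ → α) (l : ℕ) :
    shiftSeq^[k] u l = u (l + k) := by
  induction k generalizing u with
  | zero => rfl
  | succ k ih => rw [iterate_succ_apply, ih, shiftSeq, add_assoc]

/-- The product of the signs of the first `l` letters of `u`, where odd letters are the negative
ones. -/
def partialSign (u : ℕ → ℕ) (l : ℕ) : ℤ := ∏ t ∈ range l, (-1) ^ u t

lemma partialSign_zero (u : ℕ → ℕ) : partialSign u 0 = 1 := rfl

lemma partialSign_succ (u : ℕ → ℕ) (l : ℕ) :
    partialSign u (l + 1) = partialSign u l * (-1) ^ u l := prod_range_succ _ _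

lemma partialSign_succ' (u : ℕ → ℕ) (l : ℕ) :
    partialSign u (l + 1) = (-1) ^ u 0 * partialSign (shiftSeq u) l :=
  (prod_range_succ' _ _).trans (mul_comm _ _)

lemma partialSign_add (u : ℕ → ℕ) (k l : ℕ) :
    partialSign u (k + l) = partialSign u k * partialSign (shiftSeq^[k] u) l := by
  simp only [partialSign, prod_range_add, iterate_shiftSeq, add_comm _ k]

lemma partialSign_eq_or (u : ℕ → ℕ) (l : ℕ) : partialSign u l = 1 ∨ partialSign u l = -1 := by
  rw [partialSign, prod_pow_eq_pow_sum]
  exact neg_one_pow_eq_or ℤ _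

lemma partialSign_shiftSeq_of_isPeriodicPt {u : ℕ → ℕ} {p : ℕ} (h : IsPeriodicPt shiftSeq p u) :
    partialSign (shiftSeq u) p = partialSign u p := by
  have hp : u p = u 0 := by
    rw [← zero_add p, ← iterate_shiftSeq p u, h.eq]
  have hsucc := (partialSign_succ' u p).symm.trans (partialSign_succ u p)
  rw [hp, mul_comm (partialSign u p)] at hsucc
  exact mul_left_cancel₀ (pow_ne_zero _ (by norm_num)) hsucc

lemma partialSign_iterate_shiftSeq_of_isPeriodicPt {u : ℕ → ℕ} {p : ℕ}
    (h : IsPeriodicPt shiftSeq p u) (k : ℕ) :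
    partialSign (shiftSeq^[k] u) p = partialSign u p := by
  induction k with
  | zero => rfl
  | succ k ih =>
    rw [iterate_succ_apply', partialSign_shiftSeq_of_isPeriodicPt (h.apply_iterate k), ih]

lemma partialSign_mul_of_isPeriodicPt {u : ℕ → ℕ} {p : ℕ} (h : IsPeriodicPt shiftSeq p u)
    (c : ℕ) : partialSign u (p * c) = partialSign u p ^ c := by
  induction c with
  | zero => rw [mul_zero, partialSign_zero, pow_zero]
  | succ c ih =>
    rw [mul_add_one, partialSign_add, ih, partialSign_iterate_shiftSeq_of_isPeriodicPt h, pow_succ]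

/-- The sequence `u` with each letter multiplied by the product of the signs of the letters before
it. Its lexicographic order governs compatible labelings. -/
def signedSeq (u : ℕ → ℕ) (l : ℕ) : ℤ := partialSign u l * u l

lemma signedSeq_zero (u : ℕ → ℕ) : signedSeq u 0 = u 0 := one_mul _

lemma signedSeq_succ (u : ℕ → ℕ) (l : ℕ) :
    signedSeq u (l + 1) = (-1) ^ u 0 * signedSeq (shiftSeq u) l := by
  rw [signedSeq, partialSign_succ', mul_assoc]
  rfl

lemma signedSeq_injective : Injective signedSeq := by
  refine LeftInverse.injective (g := fun a l => (a l).natAbs) fun u => funext fun l => ?_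
  rcases partialSign_eq_or u l with h | h <;> simp [signedSeq, h]

lemma eq_iff_head_tail {α : Type*} {a b : ℕ → α} :
    a = b ↔ a 0 = b 0 ∧ shiftSeq a = shiftSeq b := by
  refine ⟨fun h => h ▸ ⟨rfl, rfl⟩, fun ⟨h0, h⟩ => funext fun l => ?_⟩
  cases l with
  | zero => exact h0
  | succ l => exact congrFun h l

lemma toLex_lt_toLex_iff_head_tail {α : Type*} [LT α] {a b : ℕ → α} :
    toLex a < toLex b ↔
      a 0 < b 0 ∨ a 0 = b 0 ∧ toLex (shiftSeq a) < toLex (shiftSeq b) := by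
  constructor
  · rintro ⟨_ | l, heq, hlt⟩
    · exact Or.inl hlt
    · exact Or.inr ⟨heq 0 l.succ_pos, l, fun t ht => heq (t + 1) (Nat.succ_lt_succ ht), hlt⟩
  · rintro (h | ⟨h0, l, heq, hlt⟩)
    · exact ⟨0, fun t ht => absurd ht t.not_lt_zero, h⟩
    · refine ⟨l + 1, fun t ht => ?_, hlt⟩
      cases t with
      | zero => exact h0
      | succ t => exact heq t (Nat.lt_of_succ_lt_succ ht)

end SignedSequences

section CompatibleLabelings

open Function

variable {n : ℕ}

/-- The periodic sequence read off a word around the cycle `ZMod n`, starting at `i`. -/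
def readFrom {α : Type*} (W : ZMod n → α) (i : ZMod n) : ℕ → α := fun l => W (i + l)

lemma readFrom_zero_right {α : Type*} (W : ZMod n → α) (i : ZMod n) : readFrom W i 0 = W i := by
  rw [readFrom, Nat.cast_zero, add_zero]

lemma shiftSeq_readFrom {α : Type*} (W : ZMod n → α) (i : ZMod n) :
    shiftSeq (readFrom W i) = readFrom W (i + 1) := by
  ext l
  rw [shiftSeq, readFrom, readFrom, Nat.cast_succ, add_right_comm, add_assoc i]

lemma readFrom_add_natCast {α : Type*} (W : ZMod n → α) (i : ZMod n) (k : ℕ) :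
    readFrom W (i + k) = shiftSeq^[k] (readFrom W i) := by
  ext l
  rw [iterate_shiftSeq, readFrom, readFrom, Nat.cast_add, add_assoc, add_comm (k : ZMod n)]

lemma signedSeq_readFrom_succ (W : ZMod n → ℕ) (i : ZMod n) (l : ℕ) :
    signedSeq (readFrom W i) (l + 1) = (-1) ^ W i * signedSeq (readFrom W (i + 1)) l := by
  rw [signedSeq_succ, readFrom_zero_right, shiftSeq_readFrom]

section Uniqueness

variable {φ ψ : ZMod n ≃ Fin n} {W : ZMod n → ℕ}

lemma IsCompatibleLabeling.lt_of_even (h : IsCompatibleLabeling φ W) {i j : ZMod n}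
    (hij : φ i < φ j) (hW : W i = W j) (he : Even (W i)) : φ (i + 1) < φ (j + 1) := by
  have hle := ((h i j hij).resolve_left hW.not_lt).2.1 he
  refine lt_of_le_of_ne (not_lt.1 hle) fun heq => hij.ne ?_
  rw [add_right_cancel (φ.injective heq)]

lemma IsCompatibleLabeling.lt_of_odd (h : IsCompatibleLabeling φ W) {i j : ZMod n}
    (hij : φ i < φ j) (hW : W i = W j) (ho : Odd (W i)) : φ (j + 1) < φ (i + 1) := by
  by_contra hlt
  exact Nat.not_even_iff_odd.2 ho (((h i j hij).resolve_left hW.not_lt).2.2 hlt)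

lemma IsCompatibleLabeling.signedSeq_le (h : IsCompatibleLabeling φ W) {l : ℕ} {i j : ZMod n}
    (hij : φ i < φ j)
    (heq : ∀ t < l, signedSeq (readFrom W i) t = signedSeq (readFrom W j) t) :
    signedSeq (readFrom W i) l ≤ signedSeq (readFrom W j) l := by
  induction l generalizing i j with
  | zero =>
    simpa only [signedSeq_zero, readFrom_zero_right, Nat.cast_le] using (h i j hij).le
  | succ l ih =>
    have hW : W i = W j := by
      simpa only [signedSeq_zero, readFrom_zero_right, Nat.cast_inj] using heq 0 l.succ_pos
    have htail : ∀ t < l,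
        signedSeq (readFrom W (i + 1)) t = signedSeq (readFrom W (j + 1)) t := fun t ht => by
      have := heq (t + 1) (Nat.succ_lt_succ ht)
      rw [signedSeq_readFrom_succ, signedSeq_readFrom_succ, hW] at this
      exact mul_left_cancel₀ (pow_ne_zero _ (by norm_num)) this
    rw [signedSeq_readFrom_succ, signedSeq_readFrom_succ, ← hW]
    rcases Nat.even_or_odd (W i) with he | ho
    · rw [he.neg_one_pow, one_mul, one_mul]
      exact ih (h.lt_of_even hij hW he) htail
    · rw [ho.neg_one_pow, neg_one_mul, neg_one_mul, neg_le_neg_iff]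
      exact ih (h.lt_of_odd hij hW ho) fun t ht => (htail t ht).symm

lemma IsCompatibleLabeling.toLex_signedSeq_le (h : IsCompatibleLabeling φ W) {i j : ZMod n}
    (hij : φ i < φ j) :
    toLex (signedSeq (readFrom W i)) ≤ toLex (signedSeq (readFrom W j)) :=
  not_lt.1 fun ⟨_, heq, hlt⟩ => (h.signedSeq_le hij fun t ht => (heq t ht).symm).not_gt hlt

lemma equiv_fin_ext_of_lt_imp {α : Type*} {φ ψ : α ≃ Fin n} (h : ∀ i j, φ i < φ j → ψ i < ψ j) :
    φ = ψ := by
  have hmono : StrictMono (φ.symm.trans ψ) := fun a b hab => h _ _ (by simpa using hab)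
  have hid : hmono.orderIsoOfSurjective _ (φ.symm.trans ψ).surjective = OrderIso.refl _ :=
    Subsingleton.elim _ _
  ext i : 1
  simpa using (DFunLike.congr_fun hid (φ i)).symm

lemma IsCompatibleLabeling.eq_of_lt_imp (hφ : IsCompatibleLabeling φ W)
    (hψ : IsCompatibleLabeling ψ W)
    (h : ∀ i j, readFrom W i = readFrom W j → φ i < φ j → ψ i < ψ j) : φ = ψ := by
  refine equiv_fin_ext_of_lt_imp fun i j hij => ?_
  by_contra hψij
  have hji : ψ j < ψ i := lt_of_le_of_ne (not_lt.1 hψij) fun heq => hij.ne <| by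
    rw [ψ.injective heq]
  have heq : readFrom W i = readFrom W j := signedSeq_injective <| toLex.injective <|
    le_antisymm (hφ.toLex_signedSeq_le hij) (hψ.toLex_signedSeq_le hji)
  exact hψij (h i j heq hij)

end Uniqueness

section Existence

lemma exists_equiv_fin_lt_iff {ι L : Type*} [Fintype ι] [LinearOrder L] {key : ι → L}
    (hkey : Injective key) (hn : Fintype.card ι = n) :
    ∃ φ : ι ≃ Fin n, ∀ i j, φ i < φ j ↔ key i < key j := by
  let _ : LinearOrder ι := LinearOrder.lift' key hkey
  exact ⟨(monoEquivOfFin ι hn).symm.toEquiv, fun _ _ => (monoEquivOfFin ι hn).symm.lt_iff_lt⟩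

variable {W : ZMod n → ℕ} {τ : ZMod n → ℤ}

/-- The key by which the positions of the cycle are sorted to produce a labeling: signed sequences
in lexicographic order, with ties broken by `τ`. -/
def lexKey (W : ZMod n → ℕ) (τ : ZMod n → ℤ) (i : ZMod n) : Lex (ℕ → ℤ) ×ₗ ℤ :=
  toLex (toLex (signedSeq (readFrom W i)), τ i)

lemma lexKey_injective (h : ∀ i j, readFrom W i = readFrom W j → τ i = τ j → i = j) :
    Injective (lexKey W τ) := fun i j hij => by
  have := Prod.mk.inj (toLex.injective hij)
  exact h i j (signedSeq_injective (toLex.injective this.1)) this.2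

/-- What remains of `lexKey` after the comparison of the first letters. -/
def lexTail (W : ZMod n → ℕ) (τ : ZMod n → ℤ) (i : ZMod n) : Lex (ℕ → ℤ) ×ₗ ℤ :=
  toLex (toLex (shiftSeq (signedSeq (readFrom W i))), τ i)

lemma lexKey_lt_iff (i j : ZMod n) :
    lexKey W τ i < lexKey W τ j ↔ W i < W j ∨ W i = W j ∧ lexTail W τ i < lexTail W τ j := by
  have hhead : signedSeq (readFrom W i) 0 < signedSeq (readFrom W j) 0 ↔ W i < W j := by
    rw [signedSeq_zero, signedSeq_zero, readFrom_zero_right, readFrom_zero_right, Nat.cast_lt]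
  have hhead' : signedSeq (readFrom W i) 0 = signedSeq (readFrom W j) 0 ↔ W i = W j := by
    rw [signedSeq_zero, signedSeq_zero, readFrom_zero_right, readFrom_zero_right, Nat.cast_inj]
  simp only [lexKey, lexTail, Prod.Lex.toLex_lt_toLex, toLex_inj]
  rw [toLex_lt_toLex_iff_head_tail, eq_iff_head_tail, hhead, hhead']
  tauto

lemma lexTail_of_even (hτ : ∀ i, τ (i + 1) = (-1) ^ W i * τ i) {i : ZMod n} (he : Even (W i)) :
    lexTail W τ i = lexKey W τ (i + 1) := by
  have hseq : shiftSeq (signedSeq (readFrom W i)) = signedSeq (readFrom W (i + 1)) := by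
    ext l
    rw [shiftSeq, signedSeq_readFrom_succ, he.neg_one_pow, one_mul]
  rw [lexTail, lexKey, hτ, he.neg_one_pow, one_mul, hseq]

lemma lexTail_of_odd (hτ : ∀ i, τ (i + 1) = (-1) ^ W i * τ i) {i : ZMod n} (ho : Odd (W i)) :
    lexTail W τ i = -lexKey W τ (i + 1) := by
  have hseq : shiftSeq (signedSeq (readFrom W i)) = -signedSeq (readFrom W (i + 1)) := by
    ext l
    rw [shiftSeq, signedSeq_readFrom_succ, ho.neg_one_pow, neg_one_mul, Pi.neg_apply]
  have hτ' : τ i = -τ (i + 1) := by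
    rw [hτ, ho.neg_one_pow, neg_one_mul, neg_neg]
  rw [lexTail, lexKey, hseq, hτ']
  rfl

lemma exists_isCompatibleLabeling [NeZero n] (hτ : ∀ i, τ (i + 1) = (-1) ^ W i * τ i)
    (hinj : ∀ i j, readFrom W i = readFrom W j → τ i = τ j → i = j) :
    ∃ φ : ZMod n ≃ Fin n, IsCompatibleLabeling φ W := by
  obtain ⟨φ, hφ⟩ := exists_equiv_fin_lt_iff (lexKey_injective hinj) (ZMod.card n)
  refine ⟨φ, fun i j hij => ?_⟩
  rw [hφ, lexKey_lt_iff] at hij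
  refine hij.imp_right fun ⟨hW, htail⟩ => ⟨hW, ?_⟩
  rw [hφ]
  rcases Nat.even_or_odd (W i) with he | ho
  · rw [lexTail_of_even hτ he, lexTail_of_even hτ (hW ▸ he)] at htail
    exact iff_of_true he htail.not_gt
  · rw [lexTail_of_odd hτ ho, lexTail_of_odd hτ (hW ▸ ho), neg_lt_neg_iff] at htail
    exact iff_of_false (Nat.not_even_iff_odd.2 ho) (not_not.2 htail)

end Existence

end CompatibleLabelings

/-! ### Counting the labelings of a word -/

section CountingLabelings

open Function

variable {n : ℕ}

/-- The sign recording the relative order of the labels of two positions (`-1` if they are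
equal). -/
def ordSign (φ : ZMod n ≃ Fin n) (i j : ZMod n) : ℤ := if φ i < φ j then 1 else -1

lemma ordSign_of_lt {φ : ZMod n ≃ Fin n} {i j : ZMod n} (h : φ i < φ j) : ordSign φ i j = 1 :=
  if_pos h

lemma ordSign_of_gt {φ : ZMod n ≃ Fin n} {i j : ZMod n} (h : φ j < φ i) : ordSign φ i j = -1 :=
  if_neg h.not_gt

lemma ordSign_swap (φ : ZMod n ≃ Fin n) {i j : ZMod n} (h : i ≠ j) :
    ordSign φ j i = -ordSign φ i j := by
  rcases (φ.injective.ne h).lt_or_gt with h | h <;> simp [ordSign_of_lt h, ordSign_of_gt h]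

lemma IsCompatibleLabeling.ordSign_add_one {φ : ZMod n ≃ Fin n} {W : ZMod n → ℕ}
    (hφ : IsCompatibleLabeling φ W) {i j : ZMod n} (hne : i ≠ j) (hW : W i = W j) :
    ordSign φ (i + 1) (j + 1) = (-1) ^ W i * ordSign φ i j := by
  rcases Nat.even_or_odd (W i) with he | ho <;> rcases (φ.injective.ne hne).lt_or_gt with h | h
  · rw [ordSign_of_lt (hφ.lt_of_even h hW he), ordSign_of_lt h, he.neg_one_pow, one_mul]
  · rw [ordSign_of_gt (hφ.lt_of_even h hW.symm (hW ▸ he)), ordSign_of_gt h, he.neg_one_pow, one_mul]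
  · rw [ordSign_of_gt (hφ.lt_of_odd h hW ho), ordSign_of_lt h, ho.neg_one_pow, mul_one]
  · rw [ordSign_of_lt (hφ.lt_of_odd h hW.symm (hW ▸ ho)), ordSign_of_gt h, ho.neg_one_pow,
      neg_one_mul, neg_neg]

lemma IsCompatibleLabeling.ordSign_add {φ : ZMod n ≃ Fin n} {W : ZMod n → ℕ}
    (hφ : IsCompatibleLabeling φ W) {i j : ZMod n} (hne : i ≠ j)
    (heq : readFrom W i = readFrom W j) (l : ℕ) :
    ordSign φ (i + l) (j + l) = partialSign (readFrom W i) l * ordSign φ i j := by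
  induction l with
  | zero => rw [Nat.cast_zero, add_zero, add_zero, partialSign_zero, one_mul]
  | succ l ih =>
    rw [Nat.cast_succ, ← add_assoc, ← add_assoc,
      hφ.ordSign_add_one (fun h => hne (add_right_cancel h)) (congrFun heq l), ih,
      partialSign_succ, mul_left_comm, mul_assoc]
    rfl

lemma natCast_ne_zero_of_pos_of_lt {g : ℕ} (h0 : 0 < g) (hg : g < n) : (g : ZMod n) ≠ 0 := by
  rw [Ne, ZMod.natCast_eq_zero_iff]
  exact Nat.not_dvd_of_pos_of_lt h0 hg

section Periods

variable {α : Type*} (W : ZMod n → α)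

lemma isPeriodicPt_readFrom (i : ZMod n) : IsPeriodicPt shiftSeq n (readFrom W i) := by
  rw [IsPeriodicPt, IsFixedPt, ← readFrom_add_natCast, ZMod.natCast_self, add_zero]

variable [NeZero n]

lemma readFrom_eq_iterate_shiftSeq (i : ZMod n) :
    readFrom W i = shiftSeq^[i.val] (readFrom W 0) := by
  rw [← readFrom_add_natCast, zero_add, ZMod.natCast_zmod_val]

lemma readFrom_add_of_isPeriodicPt {W : ZMod n → α} {p : ℕ}
    (h : IsPeriodicPt shiftSeq p (readFrom W 0)) (i : ZMod n) :
    readFrom W (i + p) = readFrom W i := by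
  rw [readFrom_add_natCast, readFrom_eq_iterate_shiftSeq W i]
  exact h.apply_iterate _

lemma minimalPeriod_readFrom (i : ZMod n) :
    minimalPeriod shiftSeq (readFrom W i) = minimalPeriod shiftSeq (readFrom W 0) := by
  rw [readFrom_eq_iterate_shiftSeq]
  exact minimalPeriod_apply_iterate ⟨n, NeZero.pos n, isPeriodicPt_readFrom W 0⟩ _

lemma minimalPeriod_dvd_val_sub {W : ZMod n → α} {i j : ZMod n}
    (h : readFrom W i = readFrom W j) :
    minimalPeriod shiftSeq (readFrom W 0) ∣ (j - i).val := by
  rw [← minimalPeriod_readFrom W i, ← isPeriodicPt_iff_minimalPeriod_dvd, IsPeriodicPt, IsFixedPt,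
    ← readFrom_add_natCast, ZMod.natCast_zmod_val, add_sub_cancel, h]

end Periods

lemma partialSign_periodic_of_half {W : ZMod n → ℕ} {p : ℕ}
    (hper : IsPeriodicPt shiftSeq p (readFrom W 0)) (h2p : 2 * p = n)
    (hsign : partialSign (readFrom W 0) p = -1) :
    Periodic (partialSign (readFrom W 0)) n := fun l => by
  have hn : partialSign (readFrom W 0) n = 1 := calc
    _ = partialSign (readFrom W 0) (p * 2) := congrArg _ (by rw [← h2p, mul_comm])
    _ = 1 := by rw [partialSign_mul_of_isPeriodicPt hper, hsign, neg_one_sq]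
  rw [add_comm, partialSign_add, (isPeriodicPt_readFrom W 0).eq, hn, one_mul]

variable [NeZero n] {W : ZMod n → ℕ}

/- Around the position labelled by the maximum, translation by `g` would have to reverse an
inequality that the sign `1` forces it to preserve. -/
lemma not_isCompatibleLabeling_of_partialSign_eq_one {g : ℕ} (hg : (g : ZMod n) ≠ 0)
    (hper : IsPeriodicPt shiftSeq g (readFrom W 0)) (hsign : partialSign (readFrom W 0) g = 1)
    (φ : ZMod n ≃ Fin n) : ¬ IsCompatibleLabeling φ W := by
  intro hφ
  obtain ⟨i, hi⟩ := Finite.exists_max φ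
  have hlt {j : ZMod n} (hj : j ≠ i) : φ j < φ i := (hi j).lt_of_ne (φ.injective.ne hj)
  have heq : readFrom W (i - g) = readFrom W i := by
    rw [← readFrom_add_of_isPeriodicPt hper, sub_add_cancel]
  have hne : i - g ≠ i := by rwa [Ne, sub_eq_self]
  have hsign' : partialSign (readFrom W (i - g)) g = 1 := by
    rw [readFrom_eq_iterate_shiftSeq, partialSign_iterate_shiftSeq_of_isPeriodicPt hper, hsign]
  have := hφ.ordSign_add hne heq g
  rw [hsign', sub_add_cancel, ordSign_of_lt (hlt hne),
    ordSign_of_gt (hlt fun h => hg (add_eq_left.1 h))] at this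
  norm_num at this

lemma IsCompatibleLabeling.translate {φ : ZMod n ≃ Fin n} (hφ : IsCompatibleLabeling φ W) {p : ℕ}
    (hper : IsPeriodicPt shiftSeq p (readFrom W 0)) :
    IsCompatibleLabeling ((Equiv.addRight (p : ZMod n)).trans φ) W := fun i j hij => by
  have hW (k : ZMod n) : W (k + p) = W k := by
    rw [← readFrom_zero_right W (k + p), readFrom_add_of_isPeriodicPt hper, readFrom_zero_right]
  simpa only [Equiv.trans_apply, Equiv.coe_addRight, hW, add_right_comm _ (1 : ZMod n)] using
    hφ (i + p) (j + p) hij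

lemma card_isCompatibleLabeling_of_minimalPeriod_eq
    (h : minimalPeriod shiftSeq (readFrom W 0) = n) :
    #{φ : ZMod n ≃ Fin n | IsCompatibleLabeling φ W} = 1 := by
  have hinj (i j : ZMod n) (hij : readFrom W i = readFrom W j) : i = j := by
    have hdvd := minimalPeriod_dvd_val_sub hij
    rw [h] at hdvd
    have hval := Nat.eq_zero_of_dvd_of_lt hdvd (ZMod.val_lt _)
    exact (sub_eq_zero.1 ((ZMod.val_eq_zero _).1 hval)).symm
  obtain ⟨φ, hφ⟩ := exists_isCompatibleLabeling (W := W) (τ := 0) (by simp)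
    fun i j hij _ => hinj i j hij
  refine card_eq_one.2 ⟨φ, eq_singleton_iff_unique_mem.2 ⟨mem_filter.2 ⟨mem_univ _, hφ⟩, ?_⟩⟩
  refine fun ψ hψ => (mem_filter.1 hψ).2.eq_of_lt_imp hφ fun i j hij hlt => ?_
  rw [hinj i j hij] at hlt
  exact absurd hlt (lt_irrefl _)

section HalfPeriod

variable {p : ℕ}

lemma eq_or_eq_add_of_readFrom_eq (hp : minimalPeriod shiftSeq (readFrom W 0) = p)
    (h2p : 2 * p = n) {i j : ZMod n} (hij : readFrom W i = readFrom W j) : j = i ∨ j = i + p := by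
  obtain ⟨c, hc⟩ := hp ▸ minimalPeriod_dvd_val_sub hij
  have hc2 : c < 2 := by
    have hlt := ZMod.val_lt (j - i)
    rw [hc, ← h2p, mul_comm 2] at hlt
    exact Nat.lt_of_mul_lt_mul_left hlt
  have hj : j = i + (p * c : ℕ) := by
    rw [← hc, ZMod.natCast_zmod_val, add_sub_cancel]
  interval_cases c
  · exact Or.inl (by simpa using hj)
  · exact Or.inr (by simpa using hj)

lemma exists_isCompatibleLabeling_of_half (hp : minimalPeriod shiftSeq (readFrom W 0) = p)
    (h2p : 2 * p = n) (hsign : partialSign (readFrom W 0) p = -1) :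
    ∃ φ : ZMod n ≃ Fin n, IsCompatibleLabeling φ W := by
  set u := readFrom W 0 with hu
  have hper : IsPeriodicPt shiftSeq p u := hp ▸ isPeriodicPt_minimalPeriod _ _
  have hval (l : ℕ) : partialSign u (l : ZMod n).val = partialSign u l := by
    rw [ZMod.val_natCast, (partialSign_periodic_of_half hper h2p hsign).map_mod_nat]
  refine exists_isCompatibleLabeling (τ := fun i => partialSign u i.val) (fun i => ?_)
    fun i j hij hτ => ?_
  · have hcast : ((i.val + 1 : ℕ) : ZMod n) = i + 1 := by simp
    rw [← hcast, hval, partialSign_succ, mul_comm, hu, readFrom, zero_add, ZMod.natCast_zmod_val]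
  · refine ((eq_or_eq_add_of_readFrom_eq hp h2p hij).resolve_right fun hj => ?_).symm
    have hcast : ((p + i.val : ℕ) : ZMod n) = j := by simp [hj, add_comm]
    rw [← hcast, hval, partialSign_add, hper.eq, hsign] at hτ
    rcases partialSign_eq_or u i.val with h | h <;> rw [h] at hτ <;> norm_num at hτ

lemma IsCompatibleLabeling.eq_of_ordSign_eq_of_half {φ ψ : ZMod n ≃ Fin n}
    (hφ : IsCompatibleLabeling φ W) (hψ : IsCompatibleLabeling ψ W)
    (hp : minimalPeriod shiftSeq (readFrom W 0) = p) (h2p : 2 * p = n)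
    (h : ordSign φ 0 p = ordSign ψ 0 p) : φ = ψ := by
  refine hφ.eq_of_lt_imp hψ fun i j hij hlt => ?_
  obtain rfl | rfl := eq_or_eq_add_of_readFrom_eq hp h2p hij
  · exact absurd hlt (lt_irrefl _)
  have hp0 : (0 : ZMod n) ≠ p := fun h0 => hlt.ne (by rw [← h0, add_zero])
  have hper : readFrom W 0 = readFrom W p := by
    rw [← readFrom_add_of_isPeriodicPt (hp ▸ isPeriodicPt_minimalPeriod _ _) 0, zero_add]
  have hsign : ordSign φ i (i + p) = ordSign ψ i (i + p) := by
    have hadd {θ : ZMod n ≃ Fin n} (hθ : IsCompatibleLabeling θ W) :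
        ordSign θ i (i + p) = partialSign (readFrom W 0) i.val * ordSign θ 0 p := by
      rw [← hθ.ordSign_add hp0 hper, ZMod.natCast_zmod_val, zero_add, add_comm]
    rw [hadd hφ, hadd hψ, h]
  rw [ordSign_of_lt hlt] at hsign
  by_contra hnot
  rw [ordSign, if_neg hnot] at hsign
  norm_num at hsign

lemma card_isCompatibleLabeling_of_half (hp : minimalPeriod shiftSeq (readFrom W 0) = p)
    (h2p : 2 * p = n) (hsign : partialSign (readFrom W 0) p = -1) :
    #{φ : ZMod n ≃ Fin n | IsCompatibleLabeling φ W} = 2 := by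
  obtain ⟨φ, hφ⟩ := exists_isCompatibleLabeling_of_half hp h2p hsign
  set φ' := (Equiv.addRight (p : ZMod n)).trans φ
  have hφ' : IsCompatibleLabeling φ' W := hφ.translate (hp ▸ isPeriodicPt_minimalPeriod _ _)
  have hp0 : (0 : ZMod n) ≠ p :=
    (natCast_ne_zero_of_pos_of_lt (by have := NeZero.pos n; omega) (by
      have := NeZero.pos n; omega)).symm
  have hpp : (p : ZMod n) + p = 0 := by
    rw [← Nat.cast_add, ← two_mul, h2p, ZMod.natCast_self]
  have hflip : ordSign φ' 0 p = -ordSign φ 0 p := by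
    rw [← ordSign_swap φ hp0]
    simp [φ', ordSign, hpp]
  have hne : φ ≠ φ' := fun h => by
    have := φ.injective (DFunLike.congr_fun h 0)
    exact hp0 (by simpa using this)
  refine card_eq_two.2 ⟨φ, φ', hne, ext fun ψ => ?_⟩
  rw [mem_filter_univ, mem_insert, mem_singleton]
  refine ⟨fun hψ => ?_, by rintro (rfl | rfl) <;> assumption⟩
  by_cases h : ordSign ψ 0 p = ordSign φ 0 p
  · exact Or.inl (hψ.eq_of_ordSign_eq_of_half hφ hp h2p h)
  · refine Or.inr (hψ.eq_of_ordSign_eq_of_half hφ' hp h2p ?_)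
    rw [hflip]
    grind [ordSign]

end HalfPeriod

/-- The number of compatible labelings of a word around a cycle of length `n`, in terms of the
periodic sequence `u` read off the word. -/
def labelingWeight (n : ℕ) (u : ℕ → ℕ) : ℤ :=
  (if minimalPeriod shiftSeq u = n then 1 else 0) +
    if 2 * minimalPeriod shiftSeq u = n ∧ partialSign u (minimalPeriod shiftSeq u) = -1 then 2
    else 0

theorem card_isCompatibleLabeling (W : ZMod n → ℕ) :
    (#{φ : ZMod n ≃ Fin n | IsCompatibleLabeling φ W} : ℤ) = labelingWeight n (readFrom W 0) := by
  set u := readFrom W 0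
  set p := minimalPeriod shiftSeq u with hp
  have hper : IsPeriodicPt shiftSeq p u := isPeriodicPt_minimalPeriod _ _
  have hpn : p ∣ n := (isPeriodicPt_readFrom W 0).minimalPeriod_dvd
  have hp0 : 0 < p := Nat.pos_of_dvd_of_pos hpn (NeZero.pos n)
  rw [labelingWeight, ← hp]
  by_cases hprim : p = n
  · rw [card_isCompatibleLabeling_of_minimalPeriod_eq hprim, if_pos hprim, if_neg (by omega)]
    rfl
  have hlt : p < n := (Nat.le_of_dvd (NeZero.pos n) hpn).lt_of_ne hprim
  by_cases hhalf : 2 * p = n ∧ partialSign u p = -1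
  · rw [card_isCompatibleLabeling_of_half hp.symm hhalf.1 hhalf.2, if_neg hprim, if_pos hhalf]
    rfl
  rw [if_neg hprim, if_neg hhalf, add_zero, Nat.cast_eq_zero, card_eq_zero, filter_eq_empty_iff]
  intro φ _
  rcases partialSign_eq_or u p with hsign | hsign
  · exact not_isCompatibleLabeling_of_partialSign_eq_one (natCast_ne_zero_of_pos_of_lt hp0 hlt)
      hper hsign φ
  · have h2p : p * 2 < n := by
      obtain ⟨c, hc⟩ := hpn
      have hc1 : c ≠ 1 := fun h => hprim (by rw [hc, h, mul_one])
      have hc2 : c ≠ 2 := fun h => hhalf ⟨by rw [hc, h, mul_comm], hsign⟩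
      have hc0 : c ≠ 0 := fun h => NeZero.ne n (by rw [hc, h, mul_zero])
      calc p * 2 < p * c := (Nat.mul_lt_mul_left hp0).2 (by omega)
        _ = n := hc.symm
    refine not_isCompatibleLabeling_of_partialSign_eq_one
      (natCast_ne_zero_of_pos_of_lt (Nat.mul_pos hp0 two_pos) h2p) (hper.mul_const 2) ?_ φ
    rw [partialSign_mul_of_isPeriodicPt hper, hsign, neg_one_sq]

end CountingLabelings

/-! ### Counting words -/

section CountingWords

open Function ArithmeticFunction.Moebius

section PeriodicSequences

variable {K N : ℕ} [NeZero N]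

/-- The sequences with letters less than `K` which are periodic with (not necessarily minimal)
period `N`. -/
def periodicSeqs (K N : ℕ) [NeZero N] : Finset (ℕ → ℕ) :=
  univ.image fun W : ZMod N → Fin K => readFrom (fun i => (W i : ℕ)) 0

lemma mem_periodicSeqs {u : ℕ → ℕ} :
    u ∈ periodicSeqs K N ↔ (∀ l, u l < K) ∧ IsPeriodicPt shiftSeq N u := by
  rw [periodicSeqs, mem_image_univ_iff_mem_range]
  constructor
  · rintro ⟨W, rfl⟩
    exact ⟨fun l => (W _).isLt, isPeriodicPt_readFrom _ 0⟩
  · rintro ⟨hK, hN⟩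
    have hper : Periodic u N := fun l => by rw [← iterate_shiftSeq N u, hN.eq]
    refine ⟨fun i => ⟨u i.val, hK _⟩, funext fun l => ?_⟩
    simp only [readFrom, zero_add, ZMod.val_natCast, hper.map_mod_nat]

lemma sum_periodicSeqs {M : Type*} [AddCommMonoid M] (F : (ℕ → ℕ) → M) :
    ∑ u ∈ periodicSeqs K N, F u =
      ∑ W : ZMod N → Fin K, F (readFrom (fun i => (W i : ℕ)) 0) := by
  refine sum_image fun W _ W' _ h => funext fun i => Fin.ext ?_
  have := congrFun h i.val
  simpa only [readFrom, zero_add, ZMod.natCast_zmod_val] using this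

lemma card_periodicSeqs : #(periodicSeqs K N) = K ^ N := by
  rw [card_eq_sum_ones, sum_periodicSeqs]
  simp

lemma partialSign_readFrom (W : ZMod N → ℕ) :
    partialSign (readFrom W 0) N = ∏ i, (-1) ^ W i := by
  refine prod_nbij' (fun l => (l : ZMod N)) ZMod.val (fun _ _ => mem_univ _)
    (fun i _ => mem_range.2 i.val_lt) (fun l hl => ZMod.val_cast_of_lt (mem_range.1 hl))
    (fun i _ => ZMod.natCast_zmod_val i) fun l _ => ?_
  rw [readFrom, zero_add]

lemma sum_partialSign_periodicSeqs (hK : Odd K) :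
    ∑ u ∈ periodicSeqs K N, partialSign u N = 1 := by
  have hletter : ∑ a : Fin K, (-1 : ℤ) ^ (a : ℕ) = 1 := by
    rw [Fin.sum_univ_eq_sum_range fun a => (-1 : ℤ) ^ a, neg_one_geom_sum,
      if_neg (Nat.not_even_iff_odd.2 hK)]
  simp_rw [sum_periodicSeqs, partialSign_readFrom]
  rw [← Fintype.piFinset_univ, sum_prod_piFinset univ fun (_ : ZMod N) (a : Fin K) =>
    (-1 : ℤ) ^ (a : ℕ), hletter, prod_const_one]

end PeriodicSequences

section LabelingWeight

variable {m : ℕ} {u : ℕ → ℕ}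

lemma minimalPeriod_dvd_of_labelingWeight_ne_zero {n : ℕ} (h : labelingWeight n u ≠ 0) :
    minimalPeriod shiftSeq u ∣ n := by
  contrapose! h
  rw [labelingWeight, if_neg fun h' => h h'.dvd, if_neg fun h' => h (Dvd.intro_left 2 h'.1),
    add_zero]

lemma sum_divisors_ite_two_pow_mul_eq (hm : Odd m) {a s q : ℕ} (h : s * q = 2 ^ a * m) (x : ℤ) :
    ∑ e ∈ m.divisors, (if s = 2 ^ a * e then x else 0) = if Odd q then x else 0 := by
  have ha : 0 < 2 ^ a := Nat.two_pow_pos a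
  have hcofactor {e : ℕ} (he : s = 2 ^ a * e) : e * q = m := by
    rwa [he, mul_assoc, Nat.mul_right_inj ha.ne'] at h
  by_cases hq : Odd q
  · obtain ⟨e, he⟩ : 2 ^ a ∣ s :=
      (hq.coprime_two_left.pow_left a).dvd_of_dvd_mul_right (Dvd.intro _ h.symm)
    simp only [he, Nat.mul_right_inj ha.ne']
    rw [sum_ite_eq, if_pos hq,
      if_pos (Nat.mem_divisors.2 ⟨Dvd.intro _ (hcofactor he), hm.pos.ne'⟩)]
  · rw [if_neg hq]
    refine sum_eq_zero fun e _ => if_neg fun he => hq ?_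
    exact Nat.Odd.of_mul_right (hcofactor he ▸ hm)

lemma sum_divisors_labelingWeight_of_odd (hm : Odd m) {a c : ℕ} (hc : Odd c)
    (h : minimalPeriod shiftSeq u * c = 2 ^ a * m) :
    ∑ e ∈ m.divisors, labelingWeight (2 ^ a * e) u = 1 := by
  have hhalf {e : ℕ} (he : e ∈ m.divisors) : 2 * minimalPeriod shiftSeq u ≠ 2 ^ a * e := by
    intro h2
    have hec : e * c = 2 * m := Nat.eq_of_mul_eq_mul_left (Nat.two_pow_pos a) <| by
      rw [← mul_assoc, ← h2, mul_assoc, h, mul_left_comm]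
    have hodd := (hm.of_dvd_nat (Nat.dvd_of_mem_divisors he)).mul hc
    exact Nat.not_even_iff_odd.2 hodd (hec ▸ even_two_mul m)
  simp only [labelingWeight, sum_add_distrib]
  rw [sum_divisors_ite_two_pow_mul_eq hm h, if_pos hc,
    sum_eq_zero fun e he => if_neg fun h' => hhalf he h'.1, add_zero]

lemma sum_divisors_labelingWeight_of_even (hm : Odd m) {a q : ℕ}
    (h : minimalPeriod shiftSeq u * (2 * q) = 2 ^ a * m) :
    ∑ e ∈ m.divisors, labelingWeight (2 ^ a * e) u =
      1 - partialSign u (minimalPeriod shiftSeq u) ^ q := by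
  have h2 : 2 * minimalPeriod shiftSeq u * q = 2 ^ a * m := by rw [← h]; ring
  simp only [labelingWeight, sum_add_distrib]
  rw [sum_divisors_ite_two_pow_mul_eq hm h, if_neg (Nat.not_odd_iff_even.2 (even_two_mul q)),
    zero_add]
  rcases partialSign_eq_or u (minimalPeriod shiftSeq u) with hsign | hsign <;>
    simp only [hsign, and_true]
  · norm_num
  · rw [sum_divisors_ite_two_pow_mul_eq hm h2]
    rcases Nat.even_or_odd q with hq | hq
    · rw [if_neg (Nat.not_odd_iff_even.2 hq), hq.neg_one_pow, sub_self]
    · rw [if_pos hq, hq.neg_one_pow]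
      norm_num

lemma sum_divisors_labelingWeight_two_pow_succ_mul (hm : Odd m) {j : ℕ}
    (hu : IsPeriodicPt shiftSeq (2 ^ (j + 1) * m) u) :
    ∑ e ∈ m.divisors, labelingWeight (2 ^ (j + 1) * e) u =
      1 - if IsPeriodicPt shiftSeq (2 ^ j * m) u then partialSign u (2 ^ j * m) else 0 := by
  obtain ⟨c, hc⟩ := hu.minimalPeriod_dvd
  have hdouble : 2 ^ (j + 1) * m = 2 * (2 ^ j * m) := by rw [pow_succ', mul_assoc]
  rcases Nat.even_or_odd' c with ⟨q, rfl | rfl⟩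
  · have hq : 2 ^ j * m = minimalPeriod shiftSeq u * q := by
      rw [hdouble, mul_left_comm (minimalPeriod shiftSeq u)] at hc
      exact Nat.eq_of_mul_eq_mul_left two_pos hc
    have hper : IsPeriodicPt shiftSeq (minimalPeriod shiftSeq u) u :=
      isPeriodicPt_minimalPeriod _ _
    rw [sum_divisors_labelingWeight_of_even hm hc.symm, hq, if_pos (hper.mul_const q),
      partialSign_mul_of_isPeriodicPt hper]
  · rw [sum_divisors_labelingWeight_of_odd hm (odd_two_mul_add_one q) hc.symm, if_neg, sub_zero]
    intro hper
    obtain ⟨r, hr⟩ := hper.minimalPeriod_dvd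
    have hp : 0 < minimalPeriod shiftSeq u :=
      hper.minimalPeriod_pos (Nat.mul_pos (Nat.two_pow_pos j) hm.pos)
    rw [hdouble, hr, mul_left_comm] at hc
    have := Nat.eq_of_mul_eq_mul_left hp hc
    omega

end LabelingWeight

/-- The number of pairs of a word with letters less than `K` around a cycle of length `n` and a
labeling compatible with it. -/
def labelingCount (K n : ℕ) : ℤ := ∑ᶠ u ∈ {u : ℕ → ℕ | ∀ l, u l < K}, labelingWeight n u

variable {K : ℕ}

lemma labelingCount_eq_sum_periodicSeqs {n N : ℕ} [NeZero N] (h : n ∣ N) :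
    labelingCount K n = ∑ u ∈ periodicSeqs K N, labelingWeight n u := by
  refine finsum_mem_eq_sum_of_inter_support_eq _ (Set.ext fun u => and_congr_left fun hu => ?_)
  have hper : IsPeriodicPt shiftSeq N u :=
    isPeriodicPt_iff_minimalPeriod_dvd.2 ((minimalPeriod_dvd_of_labelingWeight_ne_zero hu).trans h)
  rw [mem_coe, mem_periodicSeqs, Set.mem_ofPred_eq, and_iff_left hper]

lemma sum_divisors_labelingCount (hK : Odd K) (j : ℕ) {m : ℕ} (hm : Odd m) :
    ∑ e ∈ m.divisors, labelingCount K (2 ^ j * e) =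
      (K : ℤ) ^ (2 ^ j * m) - if j = 0 then 0 else 1 := by
  have (i : ℕ) : NeZero (2 ^ i * m) := ⟨(Nat.mul_pos (Nat.two_pow_pos i) hm.pos).ne'⟩
  rw [sum_congr rfl fun e he => labelingCount_eq_sum_periodicSeqs
    (Nat.mul_dvd_mul_left (2 ^ j) (Nat.dvd_of_mem_divisors he)), sum_comm]
  have hcard : (K : ℤ) ^ (2 ^ j * m) = ∑ _u ∈ periodicSeqs K (2 ^ j * m), 1 := by
    rw [sum_const, card_periodicSeqs, nsmul_one, Nat.cast_pow]
  rw [hcard]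
  cases j with
  | zero =>
    rw [if_pos rfl, sub_zero]
    refine sum_congr rfl fun u hu => ?_
    obtain ⟨c, hc⟩ := (mem_periodicSeqs.1 hu).2.minimalPeriod_dvd
    exact sum_divisors_labelingWeight_of_odd hm
      (Nat.Odd.of_mul_right (by rwa [← hc, pow_zero, one_mul])) hc.symm
  | succ j =>
    have hsub : {u ∈ periodicSeqs K (2 ^ (j + 1) * m) | IsPeriodicPt shiftSeq (2 ^ j * m) u} =
        periodicSeqs K (2 ^ j * m) := by
      ext u
      rw [mem_filter, mem_periodicSeqs, mem_periodicSeqs, and_assoc, and_congr_right_iff]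
      refine fun _ => and_iff_right_of_imp fun h => ?_
      rw [pow_succ', mul_assoc]
      exact h.const_mul 2
    rw [if_neg j.succ_ne_zero, sum_congr rfl fun u hu =>
      sum_divisors_labelingWeight_two_pow_succ_mul hm (mem_periodicSeqs.1 hu).2, sum_sub_distrib,
      ← sum_filter, hsub, sum_partialSign_periodicSeqs hK]

lemma labelingCount_two_pow (hK : Odd K) {j : ℕ} (hj : j ≠ 0) :
    labelingCount K (2 ^ j) = (K : ℤ) ^ 2 ^ j - 1 := by
  simpa [hj] using sum_divisors_labelingCount hK j odd_one

lemma labelingCount_two_pow_mul (hK : Odd K) (j : ℕ) {m : ℕ} (hm : Odd m) :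
    labelingCount K (2 ^ j * m) =
      ∑ d ∈ m.divisors, μ d * ((K : ℤ) ^ (2 ^ j * (m / d)) - if j = 0 then 0 else 1) := by
  have := (ArithmeticFunction.sum_eq_iff_sum_mul_moebius_eq_on {e | Odd e}
    fun _ _ hdvd h => h.of_dvd_nat hdvd).1
    (fun e _ he => sum_divisors_labelingCount hK j he) m hm.pos hm
  simp only [Int.cast_id] at this
  rw [← this, Nat.sum_divisorsAntidiagonal fun d e =>
    μ d * ((K : ℤ) ^ (2 ^ j * e) - if j = 0 then 0 else 1)]

lemma filter_odd_divisors_two_pow_mul (j : ℕ) {m : ℕ} (hm : Odd m) :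
    {d ∈ (2 ^ j * m).divisors | Odd d} = m.divisors := by
  ext d
  rw [mem_filter, Nat.mem_divisors, Nat.mem_divisors, and_iff_left hm.pos.ne',
    and_iff_left (Nat.mul_pos (Nat.two_pow_pos j) hm.pos).ne']
  exact ⟨fun ⟨hd, hodd⟩ => (hodd.coprime_two_right.pow_right j).dvd_of_dvd_mul_left hd,
    fun hd => ⟨hd.mul_left _, hm.of_dvd_nat hd⟩⟩

lemma sum_divisors_moebius_eq_zero {m : ℕ} (hm : m ≠ 1) : ∑ d ∈ m.divisors, μ d = 0 := by
  rw [← ArithmeticFunction.coe_zeta_mul_apply, ArithmeticFunction.coe_zeta_mul_moebius,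
    ArithmeticFunction.one_apply_ne hm]

lemma labelingCount_of_ne_two_pow (hK : Odd K) {n : ℕ} (hn : n ≠ 0) (hpow : ¬∃ j, n = 2 ^ j) :
    labelingCount K n = ∑ d ∈ n.divisors with Odd d, μ d * (K : ℤ) ^ (n / d) := by
  obtain ⟨j, m, hm, rfl⟩ := Nat.exists_eq_two_pow_mul_odd hn
  have hm1 : m ≠ 1 := fun h => hpow ⟨j, by rw [h, mul_one]⟩
  rw [filter_odd_divisors_two_pow_mul j hm, labelingCount_two_pow_mul hK j hm]
  simp only [mul_sub, sum_sub_distrib]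
  rw [← sum_mul, sum_divisors_moebius_eq_zero hm1, zero_mul, sub_zero]
  refine sum_congr rfl fun d hd => ?_
  rw [Nat.mul_div_assoc _ (Nat.dvd_of_mem_divisors hd)]

end CountingWords

section CyclicLeftPeaks

variable {n : ℕ}

lemma sum_card_isEnriched_rotationConj_eq_labelingCount [NeZero n] (K : ℕ) :
    ((∑ φ : ZMod n ≃ Fin n,
      #{f : Fin n → Fin K | IsEnriched (rotationConj φ) fun i => (f i : ℕ)} : ℕ) : ℤ) =
      labelingCount K n := by
  rw [sum_card_isEnriched_rotationConj, labelingCount_eq_sum_periodicSeqs dvd_rfl,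
    sum_periodicSeqs, Nat.cast_sum]
  exact sum_congr rfl fun W _ => card_isCompatibleLabeling fun i => (W i : ℕ)

lemma coe_sum_cyclicSet_lpk_monomial (hn : 2 ≤ n) :
    ((n * ∑ π ∈ cyclicSet n, 4 ^ lpk n π * Polynomial.X ^ lpk n π *
      (1 + Polynomial.X) ^ (n - 2 * lpk n π) : Polynomial ℚ) : PowerSeries ℚ) =
      (1 - PowerSeries.X) ^ (n + 1) *
        PowerSeries.mk fun k => (labelingCount (2 * k + 1) n : ℚ) := by
  have : NeZero n := ⟨by omega⟩
  have hcoe (π : Equiv.Perm (Fin n)) :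
      ((4 ^ lpk n π * Polynomial.X ^ lpk n π * (1 + Polynomial.X) ^ (n - 2 * lpk n π) :
        Polynomial ℚ) : PowerSeries ℚ) = (1 - PowerSeries.X) ^ (n + 1) * PowerSeries.mk fun k =>
          (#{f : Fin n → Fin (2 * k + 1) | IsEnriched π fun i => (f i : ℕ)} : ℚ) := by
    rw [← lpk_monomial_eq_mk_card_isEnriched π (NeZero.ne n)]
    have h4 : ((4 : Polynomial ℚ) : PowerSeries ℚ) = 4 :=
      map_ofNat (Polynomial.coeToPowerSeries.ringHom (R := ℚ)) 4
    simp [h4]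
  rw [← nsmul_eq_mul, ← sum_rotationConj hn, ← Polynomial.coeToPowerSeries.ringHom_apply, map_sum]
  simp only [Polynomial.coeToPowerSeries.ringHom_apply, hcoe]
  rw [← mul_sum]
  congr 1
  ext k
  simp only [map_sum, PowerSeries.coeff_mk]
  rw [← sum_card_isEnriched_rotationConj_eq_labelingCount]
  push_cast
  rfl

variable {B : ℕ → Polynomial ℚ}

lemma coe_sub_one_sub_X_pow (hB : (B n : PowerSeries ℚ) = (1 - PowerSeries.X) ^ (n + 1) *
      PowerSeries.mk fun k => ((2 * k + 1 : ℕ) : ℚ) ^ n) :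
    ((B n - (1 - Polynomial.X) ^ n : Polynomial ℚ) : PowerSeries ℚ) =
      (1 - PowerSeries.X) ^ (n + 1) *
        PowerSeries.mk fun k => ((2 * k + 1 : ℕ) : ℚ) ^ n - 1 := by
  have hsub : (PowerSeries.mk fun k => ((2 * k + 1 : ℕ) : ℚ) ^ n - 1) =
      (PowerSeries.mk fun k => ((2 * k + 1 : ℕ) : ℚ) ^ n) - PowerSeries.mk 1 := by
    ext k
    simp only [map_sub, PowerSeries.coeff_mk, Pi.one_apply]
  rw [hsub, mul_sub, ← hB, pow_succ, mul_assoc, mul_comm (1 - PowerSeries.X) (PowerSeries.mk 1),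
    PowerSeries.mk_one_mul_one_sub_eq_one, mul_one, Polynomial.coe_sub, Polynomial.coe_pow,
    Polynomial.coe_sub, Polynomial.coe_one, Polynomial.coe_X]

lemma coe_sum_mul_one_sub_X_pow_mul (hB : ∀ m, (B m : PowerSeries ℚ) =
      (1 - PowerSeries.X) ^ (m + 1) * PowerSeries.mk fun k => ((2 * k + 1 : ℕ) : ℚ) ^ m)
    (s : Finset ℕ) (c : ℕ → ℤ) :
    ((∑ d ∈ s, (c d : Polynomial ℚ) * (1 - Polynomial.X) ^ (n - n / d) * B (n / d) :
      Polynomial ℚ) : PowerSeries ℚ) =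
      (1 - PowerSeries.X) ^ (n + 1) *
        PowerSeries.mk fun k => ∑ d ∈ s, (c d : ℚ) * ((2 * k + 1 : ℕ) : ℚ) ^ (n / d) := by
  have hmk : (PowerSeries.mk fun k => ∑ d ∈ s, (c d : ℚ) * ((2 * k + 1 : ℕ) : ℚ) ^ (n / d)) =
      ∑ d ∈ s, (c d : PowerSeries ℚ) *
        PowerSeries.mk fun k => ((2 * k + 1 : ℕ) : ℚ) ^ (n / d) := by
    ext k
    simp only [map_sum, PowerSeries.coeff_mk, ← map_intCast (PowerSeries.C (R := ℚ)),
      PowerSeries.coeff_C_mul]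
  rw [hmk, mul_sum, ← Polynomial.coeToPowerSeries.ringHom_apply, map_sum]
  refine sum_congr rfl fun d _ => ?_
  have hexp : n + 1 = (n - n / d) + (n / d + 1) := by
    have := Nat.div_le_self n d
    omega
  rw [map_mul, map_mul, map_pow, map_intCast, map_sub, map_one]
  simp only [Polynomial.coeToPowerSeries.ringHom_apply, Polynomial.coe_X, hB]
  rw [hexp, pow_add]
  ring

end CyclicLeftPeaks

theorem stmt6 (n : ℕ) (hn : 2 ≤ n) (B : ℕ → Polynomial ℚ)
    (hB : ∀ m : ℕ, ((B m : PowerSeries ℚ))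
      = (1 - PowerSeries.X) ^ (m + 1)
          * PowerSeries.mk (fun k => ((2 * k + 1 : ℕ) : ℚ) ^ m)) :
    ((∃ j : ℕ, n = 2 ^ j) →
      (n : Polynomial ℚ)
          * ∑ π ∈ cyclicSet n,
              (4 : Polynomial ℚ) ^ lpk n π * Polynomial.X ^ lpk n π
                * (1 + Polynomial.X) ^ (n - 2 * lpk n π)
        = B n - (1 - Polynomial.X) ^ n) ∧
    (¬ (∃ j : ℕ, n = 2 ^ j) →
      (n : Polynomial ℚ)
          * ∑ π ∈ cyclicSet n,
              (4 : Polynomial ℚ) ^ lpk n π * Polynomial.X ^ lpk n π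
                * (1 + Polynomial.X) ^ (n - 2 * lpk n π)
        = ∑ d ∈ n.divisors.filter (fun d => Odd d),
            ((ArithmeticFunction.moebius d : ℤ) : Polynomial ℚ)
              * (1 - Polynomial.X) ^ (n - n / d) * B (n / d)) := by
  have hlhs := coe_sum_cyclicSet_lpk_monomial hn
  have hK (k : ℕ) : Odd (2 * k + 1) := odd_two_mul_add_one k
  constructor
  · rintro ⟨j, rfl⟩
    have hj : j ≠ 0 := by
      rintro rfl
      norm_num at hn
    apply Polynomial.coe_injective ℚ
    rw [hlhs, coe_sub_one_sub_X_pow (hB _)]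
    simp_rw [labelingCount_two_pow (hK _) hj]
    push_cast
    rfl
  · intro hpow
    apply Polynomial.coe_injective ℚ
    rw [hlhs, coe_sum_mul_one_sub_X_pow_mul hB]
    simp_rw [labelingCount_of_ne_two_pow (hK _) (by omega) hpow]
    push_cast
    rfl

end
end
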